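/- arXiv:2407.10697 — 3 statements merged into one kernel-verified Lean document; each statement's English description precedes it below -/
import Mathlib

section
/- Let d ≥ 5 be an integer and α > 0 a real number. Then the largest root of the Jacobi polynomial p_d^{α,α} satisfies t_{1,d}^{α,α} < sqrt(1−q_{d,α})·(1 − 3(α+1)^{4/3}/(2·d^{2/3}·(d+α+1)^{2/3}·(d+2α+1)^{2/3})), where q_{d,α} := (α²−1)/((d+α)(d+α+1)). -/
open MeasureTheory Filter Real

noncomputable section

/-- Generalized binomial coefficient `C(a, k)` for real `a`. -/
def genBinom (a : ℝ) (k : ℕ) : ℝ := (∏ i ∈ Finset.range k, (a - i)) / (Nat.factorial k : ℝ)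

/-- The Jacobi polynomial `p_d^{α,β}`, via the standard explicit formula; it is the degree-`d`
polynomial orthogonal to lower degrees for the weight `(1-t)^α (1+t)^β` on `[-1,1]`,
normalized by `p_d^{α,β}(1) = Γ(d+α+1)/(Γ(α+1)Γ(d+1))`. -/
def jacobiP (α β : ℝ) (d : ℕ) (x : ℝ) : ℝ :=
  ∑ s ∈ Finset.range (d + 1),
    genBinom ((d : ℝ) + α) (d - s) * genBinom ((d : ℝ) + β) s *
      ((x - 1) / 2) ^ s * ((x + 1) / 2) ^ (d - s)

/-- The largest root `t_{1,d}^{α,β}` of the Jacobi polynomial `p_d^{α,β}`. -/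
def maxRoot (α β : ℝ) (d : ℕ) : ℝ := sSup {x : ℝ | jacobiP α β d x = 0}

/-- `q_{d,α} = (α² - 1)/((d+α)(d+α+1))`. -/
def qda (d : ℕ) (α : ℝ) : ℝ := (α ^ 2 - 1) / (((d : ℝ) + α) * ((d : ℝ) + α + 1))

open Polynomial in
/-- The coefficients of `jacobiP α α d`. -/
def jcoef (α : ℝ) (d s : ℕ) : ℝ := genBinom ((d : ℝ) + α) (d - s) * genBinom ((d : ℝ) + α) s

open Polynomial in
/-- The polynomial `(X - 1)/2`. -/
def jU : ℝ[X] := C (1/2) * (X - 1)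

open Polynomial in
/-- The polynomial `(X + 1)/2`. -/
def jV : ℝ[X] := C (1/2) * (X + 1)

open Polynomial in
/-- `jacobiP α α d` as a polynomial. -/
def jpoly (α : ℝ) (d : ℕ) : ℝ[X] :=
  ∑ s ∈ Finset.range (d + 1), C (jcoef α d s) * (jU ^ s * jV ^ (d - s))

open Polynomial in
theorem jpoly_eval (α : ℝ) (d : ℕ) (x : ℝ) : (jpoly α d).eval x = jacobiP α α d x := by
  unfold jpoly jacobiP jcoef jU jV
  rw [eval_finsetSum]
  refine Finset.sum_congr rfl fun s _ => ?_
  simp only [eval_mul, eval_C, eval_pow, eval_sub, eval_add, eval_X, eval_one]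
  rw [show (1/2 : ℝ) * (x - 1) = (x-1)/2 by ring, show (1/2 : ℝ) * (x + 1) = (x+1)/2 by ring]
  ring

theorem genBinom_succ (a : ℝ) (k : ℕ) :
    genBinom a (k + 1) * (k + 1) = genBinom a k * (a - k) := by
  unfold genBinom
  rw [Finset.prod_range_succ, Nat.factorial_succ]
  have : (Nat.factorial k : ℝ) ≠ 0 := by positivity
  push_cast
  field_simp

theorem jcoef_rel1 (α : ℝ) (m s : ℕ) (hs : s ≤ m) :
    jcoef (α + 1) m s * (α + 1 + s) = (m + 1 - s) * jcoef α (m + 1) s := by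
  obtain ⟨e, rfl⟩ := Nat.exists_eq_add_of_le hs
  unfold jcoef
  rw [show s + e - s = e by omega, show s + e + 1 - s = e + 1 by omega]
  have h := genBinom_succ (((s + e : ℕ) : ℝ) + (α + 1)) e
  rw [show (((s + e + 1 : ℕ) : ℝ) + α) = ((s + e : ℕ) : ℝ) + (α + 1) by push_cast; ring]
  push_cast at h ⊢
  linear_combination (-genBinom ((s:ℝ) + e + (α + 1)) s) * h

theorem jcoef_rel2 (α : ℝ) (m s : ℕ) (hs : s ≤ m) :
    jcoef (α + 1) m s * (α + 1 + (m - s)) = (s + 1) * jcoef α (m + 1) (s + 1) := by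
  obtain ⟨e, rfl⟩ := Nat.exists_eq_add_of_le hs
  unfold jcoef
  rw [show s + e - s = e by omega, show s + e + 1 - (s + 1) = e by omega]
  have h := genBinom_succ (((s + e : ℕ) : ℝ) + (α + 1)) s
  rw [show (((s + e + 1 : ℕ) : ℝ) + α) = ((s + e : ℕ) : ℝ) + (α + 1) by push_cast; ring]
  push_cast at h ⊢
  linear_combination (-genBinom ((s:ℝ) + e + (α + 1)) e) * h

open Polynomial in
theorem jU_der : derivative jU = C (1/2) := by simp [jU]

open Polynomial in
theorem jV_der : derivative jV = C (1/2) := by simp [jV]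

open Polynomial in
theorem jterm_der (s e : ℕ) :
    jU * jV * derivative (jU ^ s * jV ^ e) =
      C (1/2) * (C (s:ℝ) * (jU ^ s * jV ^ (e + 1)) + C (e:ℝ) * (jU ^ (s + 1) * jV ^ e)) := by
  rw [derivative_mul, derivative_pow, derivative_pow, jU_der, jV_der]
  rcases s with _ | s <;> rcases e with _ | e <;> simp <;> ring

open Polynomial in
/-- Raising relation. -/
theorem jpoly_raise (α : ℝ) (m : ℕ) :
    C 2 * (jU * jV * derivative (jpoly (α + 1) m)) + C (α + 1) * ((jU + jV) * jpoly (α + 1) m)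
      = C ((m : ℝ) + 1) * jpoly α (m + 1) := by
  have h1 : C ((m : ℝ) + 1) * jpoly α (m + 1) =
      (∑ s ∈ Finset.range (m + 1), C (((m:ℝ) + 1 - s) * jcoef α (m + 1) s) *
          (jU ^ s * jV ^ (m + 1 - s)))
      + ∑ s ∈ Finset.range (m + 1), C (((s:ℝ) + 1) * jcoef α (m + 1) (s + 1)) *
          (jU ^ (s + 1) * jV ^ (m - s)) := by
    have e1 := Finset.sum_range_succ (fun s : ℕ => C (((m:ℝ) + 1 - s) * jcoef α (m + 1) s) *
          (jU ^ s * jV ^ (m + 1 - s))) (m + 1)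
    have e2 := Finset.sum_range_succ' (fun s : ℕ => C ((s:ℝ) * jcoef α (m + 1) s) *
          (jU ^ s * jV ^ (m + 1 - s))) (m + 1)
    simp only [Nat.cast_add, Nat.cast_one, sub_self, zero_mul, C_0, add_zero, Nat.cast_zero,
      Nat.add_sub_add_right] at e1 e2
    rw [← e1, ← e2, ← Finset.sum_add_distrib]
    unfold jpoly
    rw [Finset.mul_sum]
    refine Finset.sum_congr rfl fun s _ => ?_
    simp only [C_mul, C_add, C_sub, C_1]
    ring
  rw [h1, ← Finset.sum_add_distrib]
  conv_lhs => unfold jpoly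
  rw [derivative_sum, Finset.mul_sum, Finset.mul_sum, Finset.mul_sum, Finset.mul_sum,
    ← Finset.sum_add_distrib]
  refine Finset.sum_congr rfl fun s hs => ?_
  have hs' : s ≤ m := by simpa [Nat.lt_succ_iff] using hs
  rw [← jcoef_rel1 α m s hs', ← jcoef_rel2 α m s hs']
  obtain ⟨e, rfl⟩ := Nat.exists_eq_add_of_le hs'
  rw [show s + e - s = e by omega, show s + e + 1 - s = e + 1 by omega]
  rw [derivative_C_mul]
  have h := jterm_der s e
  have h2 : (C 2 : ℝ[X]) * C (1/2) = 1 := by rw [← C_mul]; norm_num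
  simp only [C_mul, C_add, C_sub, C_1, Nat.cast_add]
  linear_combination (C 2 * C (jcoef (α+1) (s+e) s)) * h +
    (C (jcoef (α+1) (s+e) s)) * (C (s:ℝ) * (jU ^ s * jV ^ (e + 1)) + C (e:ℝ) * (jU ^ (s + 1) * jV ^ e)) * h2

open Polynomial in
/-- Derivative relation. -/
theorem jpoly_der (α : ℝ) (m : ℕ) :
    C 2 * derivative (jpoly α (m + 1)) = C ((m : ℝ) + 2 + 2 * α) * jpoly (α + 1) m := by
  have hterm : ∀ s e : ℕ, C 2 * derivative (jU ^ s * jV ^ e) =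
      C (s:ℝ) * (jU ^ (s - 1) * jV ^ e) + C (e:ℝ) * (jU ^ s * jV ^ (e - 1)) := by
    intro s e
    have h2 : (C 2 : ℝ[X]) * C (1/2) = 1 := by rw [← C_mul]; norm_num
    rw [derivative_mul, derivative_pow, derivative_pow, jU_der, jV_der]
    linear_combination (C (s:ℝ) * (jU ^ (s - 1) * jV ^ e) + C (e:ℝ) * (jU ^ s * jV ^ (e - 1))) * h2
  have h1 : C 2 * derivative (jpoly α (m + 1)) =
      (∑ s ∈ Finset.range (m + 1 + 1), C ((s:ℝ) * jcoef α (m + 1) s) *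
          (jU ^ (s - 1) * jV ^ (m + 1 - s)))
      + ∑ s ∈ Finset.range (m + 1 + 1), C (((m:ℝ) + 1 - s) * jcoef α (m + 1) s) *
          (jU ^ s * jV ^ (m + 1 - s - 1)) := by
    unfold jpoly
    rw [derivative_sum, Finset.mul_sum, ← Finset.sum_add_distrib]
    refine Finset.sum_congr rfl fun s hs => ?_
    have hs' : s ≤ m + 1 := by simpa [Nat.lt_succ_iff] using hs
    rw [derivative_C_mul]
    have h := hterm s (m + 1 - s)
    rw [Nat.cast_sub hs'] at h
    simp only [C_mul, C_add, C_sub, C_1, Nat.cast_add, Nat.cast_one] at h ⊢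
    linear_combination (C (jcoef α (m+1) s)) * h
  rw [h1, Finset.sum_range_succ', Finset.sum_range_succ _ (m+1)]
  simp only [Nat.cast_add, Nat.cast_one, sub_self, zero_mul, C_0, add_zero, Nat.cast_zero,
      Nat.add_sub_add_right, Nat.add_sub_cancel]
  rw [← Finset.sum_add_distrib]
  unfold jpoly
  rw [Finset.mul_sum]
  refine Finset.sum_congr rfl fun s hs => ?_
  have hs' : s ≤ m := by simpa [Nat.lt_succ_iff] using hs
  rw [← jcoef_rel1 α m s hs', ← jcoef_rel2 α m s hs']
  obtain ⟨e, rfl⟩ := Nat.exists_eq_add_of_le hs'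
  rw [show s + e - s = e by omega, show s + e + 1 - s - 1 = e by omega]
  simp only [C_mul, C_add, C_sub, C_1, Nat.cast_add, map_ofNat]
  ring

open Polynomial in
/-- The Gegenbauer differential equation. -/
theorem jpoly_ode (α : ℝ) (m : ℕ) :
    (1 - X ^ 2) * derivative (derivative (jpoly α (m + 1)))
      - C (2 * (α + 1)) * (X * derivative (jpoly α (m + 1)))
      + C (((m:ℝ) + 1) * (m + 2 + 2 * α)) * jpoly α (m + 1) = 0 := by
  have hd := jpoly_der α m
  have hr := jpoly_raise α m
  have hd2 := congrArg derivative hd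
  rw [derivative_C_mul, derivative_C_mul] at hd2
  have hU : (C 2 : ℝ[X]) * jU = X - 1 := by
    unfold jU; rw [← mul_assoc, ← C_mul]; norm_num
  have hV : (C 2 : ℝ[X]) * jV = X + 1 := by
    unfold jV; rw [← mul_assoc, ← C_mul]; norm_num
  have h2 : (C 2 : ℝ[X]) = 2 := map_ofNat C 2
  have hk : (2 : ℝ[X]) ≠ 0 := two_ne_zero
  simp only [C_mul, C_add, C_1, h2] at hd hr hd2 hU hV ⊢
  set f := jpoly (α + 1) m
  set y := jpoly α (m + 1)
  have hx : (jU + jV) = X := by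
    apply mul_left_cancel₀ hk
    linear_combination hU + hV
  have hUV : (4:ℝ[X]) * (jU * jV) = X ^ 2 - 1 := by
    linear_combination hU * (2 * jV) + (X - 1) * hV
  rw [hx] at hr
  linear_combination (-(C (m:ℝ) + 2 + 2 * C α)) * hr + (-2 * jU * jV) * hd2 - (C α + 1) * X * hd
    + derivative (derivative y) * hUV

theorem genBinom_pos (a : ℝ) (k : ℕ) (h : (k : ℝ) < a + 1) : 0 < genBinom a k := by
  unfold genBinom
  apply div_pos _ (by positivity)
  apply Finset.prod_pos
  intro i hi
  have : i + 1 ≤ k := Finset.mem_range.mp hi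
  have : (i : ℝ) + 1 ≤ k := by exact_mod_cast this
  linarith

open Polynomial in
theorem jpoly_eval_one (α : ℝ) (hα : 0 < α) (d : ℕ) : (jpoly α d).eval 1 ≠ 0 := by
  rw [jpoly_eval]
  unfold jacobiP
  rw [Finset.sum_range_succ', Finset.sum_eq_zero]
  · have h1 := genBinom_pos ((d : ℝ) + α) d (by linarith)
    have h2 := genBinom_pos ((d : ℝ) + α) 0 (by push_cast; positivity)
    norm_num
    exact ⟨h1.ne', h2.ne'⟩
  · intro i _
    simp

open Polynomial in
theorem jpoly_natDegree_le (α : ℝ) (d : ℕ) : (jpoly α d).natDegree ≤ d := by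
  unfold jpoly
  apply natDegree_sum_le_of_forall_le
  intro s hs
  have hs' : s ≤ d := by simpa [Nat.lt_succ_iff] using hs
  have hU : jU.natDegree ≤ 1 := by unfold jU; compute_degree
  have hV : jV.natDegree ≤ 1 := by unfold jV; compute_degree
  refine (natDegree_C_mul_le _ _).trans (natDegree_mul_le.trans ?_)
  have h1 : (jU ^ s).natDegree ≤ s * 1 := natDegree_pow_le_of_le s hU
  have h2 : (jV ^ (d - s)).natDegree ≤ (d - s) * 1 := natDegree_pow_le_of_le _ hV
  omega

open Polynomial in
/-- Rolle step. -/
theorem jpoly_rolle (α : ℝ) (hα : 0 < α) (m : ℕ) (a b : ℝ) (hab : a < b) (ha : -1 ≤ a) (hb : b ≤ 1)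
    (h1 : a = -1 ∨ (jpoly (α + 1) m).eval a = 0) (h2 : b = 1 ∨ (jpoly (α + 1) m).eval b = 0) :
    ∃ c, a < c ∧ c < b ∧ (jpoly α (m + 1)).eval c = 0 := by
  set f := jpoly (α + 1) m with hf
  let φ : ℝ → ℝ := fun x => (1 - x ^ 2) ^ (α + 1) * f.eval x
  let φ' : ℝ → ℝ := fun x => (-(2 * x)) * (α + 1) * (1 - x ^ 2) ^ (α + 1 - 1) * f.eval x
    + (1 - x ^ 2) ^ (α + 1) * (derivative f).eval x
  have z1 : φ a = 0 := by
    rcases h1 with h | h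
    · simp only [φ, h]; norm_num; left; rw [Real.zero_rpow (by linarith)]
    · simp only [φ, h, mul_zero]
  have z2 : φ b = 0 := by
    rcases h2 with h | h
    · simp only [φ, h]; norm_num; left; rw [Real.zero_rpow (by linarith)]
    · simp only [φ, h, mul_zero]
  have hc : Continuous φ := by
    apply Continuous.mul _ f.continuous
    exact Continuous.rpow_const (by fun_prop) (fun x => Or.inr (by linarith))
  have hder : ∀ x ∈ Set.Ioo a b, HasDerivAt φ (φ' x) x := by
    intro x hx
    have hw : 0 < 1 - x ^ 2 := by nlinarith [hx.1, hx.2]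
    have g1 : HasDerivAt (fun x : ℝ => 1 - x ^ 2) (-(2 * x)) x := by
      have := ((hasDerivAt_id x).pow 2).const_sub 1
      simpa using this
    exact (g1.rpow_const (Or.inl hw.ne')).mul (f.hasDerivAt x)
  obtain ⟨c, hc1, hc2⟩ := exists_hasDerivAt_eq_zero hab hc.continuousOn (z1.trans z2.symm) hder
  refine ⟨c, hc1.1, hc1.2, ?_⟩
  have hw : 0 < 1 - c ^ 2 := by nlinarith [hc1.1, hc1.2]
  have hr := congrArg (eval c) (jpoly_raise α m)
  simp only [eval_mul, eval_add, eval_C, ← hf, jU, jV, eval_sub, eval_X, eval_one] at hr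
  have hp : 0 < (1 - c ^ 2) ^ α := Real.rpow_pos_of_pos hw _
  have hs : (1 - c ^ 2) ^ (α + 1) = (1 - c ^ 2) ^ α * (1 - c ^ 2) := by
    rw [Real.rpow_add hw, Real.rpow_one]
  simp only [φ', hs, add_sub_cancel_right] at hc2
  have h3 : (1 - c ^ 2) ^ α * (((m : ℝ) + 1) * eval c (jpoly α (m + 1))) = 0 := by
    rw [← hr]; linear_combination (-1/2) * hc2
  have hm : (m : ℝ) + 1 ≠ 0 := by positivity
  rcases mul_eq_zero.mp h3 with h | h
  · exact absurd h hp.ne'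
  · exact (mul_eq_zero.mp h).resolve_left hm

open Polynomial in
theorem jpoly_roots_seq (d : ℕ) : ∀ α : ℝ, 0 < α → ∃ z : ℕ → ℝ, z 0 = -1 ∧ z (d + 1) = 1 ∧
    (∀ i ≤ d, z i < z (i + 1)) ∧ ∀ i, 1 ≤ i → i ≤ d → (jpoly α d).eval (z i) = 0 := by
  induction d with
  | zero =>
    intro α hα
    refine ⟨fun i => if i = 0 then -1 else 1, by simp, by simp, ?_, ?_⟩
    · intro i hi
      have : i = 0 := by omega
      subst this; norm_num
    · intro i h1 h2; omega
  | succ m ih =>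
    intro α hα
    obtain ⟨z, z0, z1, hlt, hz⟩ := ih (α + 1) (by linarith)
    have mono : ∀ j, j ≤ m + 1 → ∀ i, i ≤ j → z i ≤ z j := by
      intro j
      induction j with
      | zero => intro _ i hi; have : i = 0 := by omega
                subst this; exact le_rfl
      | succ j ihj =>
        intro hj i hi
        rcases Nat.lt_or_ge i (j + 1) with h | h
        · exact (ihj (by omega) i (by omega)).trans (hlt j (by omega)).le
        · have : i = j + 1 := by omega
          subst this; exact le_rfl
    have key : ∀ i, ∃ c, i ≤ m → z i < c ∧ c < z (i + 1) ∧ (jpoly α (m + 1)).eval c = 0 := by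
      intro i
      by_cases hi : i ≤ m
      · obtain ⟨c, h⟩ := jpoly_rolle α hα m (z i) (z (i + 1)) (hlt i hi)
          (by rw [← z0]; exact mono i (by omega) 0 (by omega))
          (by rw [← z1]; exact mono (m + 1) le_rfl (i + 1) (by omega))
          (by
            rcases Nat.eq_zero_or_pos i with h | h
            · left; rw [h, z0]
            · right; exact hz i h hi)
          (by
            rcases Nat.lt_or_ge i m with h | h
            · right; exact hz (i + 1) (by omega) (by omega)
            · left; have : i = m := by omega
              rw [this, z1])
        exact ⟨c, fun _ => h⟩
      · exact ⟨0, fun h => absurd h hi⟩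
    choose c hc using key
    refine ⟨fun i => if i = 0 then -1 else if i = m + 2 then 1 else c (i - 1), by simp, by simp, ?_, ?_⟩
    · intro i hi
      rcases i with _ | i
      · have := (hc 0 (by omega)).1
        simp
        rwa [z0] at this
      · have h1 := (hc i (by omega)).2.1
        rcases Nat.lt_or_ge i m with h | h
        · have h2 := (hc (i + 1) (by omega)).1
          have e1 : i ≠ m + 1 := by omega
          have e2 : i ≠ m := by omega
          simp [e1, e2]
          linarith
        · have : i = m := by omega
          subst this
          simp
          rwa [z1] at h1
    · intro i h1 h2
      obtain ⟨j, rfl⟩ : ∃ j, i = j + 1 := ⟨i - 1, by omega⟩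
      have e1 : j ≠ m + 1 := by omega
      simp [e1]
      exact (hc j (by omega)).2.2

open Polynomial in
/-- `jpoly` splits with simple real roots. -/
theorem jpoly_factor (α : ℝ) (hα : 0 < α) (d : ℕ) : ∃ T : Finset ℝ, ∃ k : ℝ, T.card = d ∧ k ≠ 0 ∧
    jpoly α d = C k * ∏ a ∈ T, (X - C a) := by
  obtain ⟨z, -, -, hlt, hz⟩ := jpoly_roots_seq d α hα
  have hne : jpoly α d ≠ 0 := by
    intro h; apply jpoly_eval_one α hα d; rw [h]; simp
  have mono : ∀ j, j ≤ d + 1 → ∀ i, i < j → z i < z j := by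
    intro j
    induction j with
    | zero => intro _ i hi; omega
    | succ j ihj =>
      intro hj i hi
      rcases Nat.lt_or_ge i j with h | h
      · exact (ihj (by omega) i h).trans (hlt j (by omega))
      · have : i = j := by omega
        subst this; exact hlt i (by omega)
  have hinj : Set.InjOn z (Finset.Icc 1 d : Finset ℕ) := by
    intro i hi j hj hij
    simp at hi hj
    rcases lt_trichotomy i j with h | h | h
    · exact absurd hij (mono j (by omega) i h).ne
    · exact h
    · exact absurd hij (mono i (by omega) j h).ne'
  have hcard : ((Finset.Icc 1 d).image z).card = d := by
    rw [Finset.card_image_of_injOn hinj]; simp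
  have hsub : (Finset.Icc 1 d).image z ⊆ (jpoly α d).roots.toFinset := by
    intro x hx
    obtain ⟨i, hi, rfl⟩ := Finset.mem_image.mp hx
    simp at hi
    rw [Multiset.mem_toFinset, mem_roots hne]
    exact hz i hi.1 hi.2
  have c1 := Finset.card_le_card hsub
  have c2 := Multiset.toFinset_card_le (jpoly α d).roots
  have c3 := card_roots' (jpoly α d)
  have c4 := jpoly_natDegree_le α d
  have hrc : Multiset.card (jpoly α d).roots = (jpoly α d).natDegree := by omega
  have hnd : (jpoly α d).roots.Nodup := by
    rw [← Multiset.toFinset_card_eq_card_iff_nodup]; omega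
  refine ⟨(jpoly α d).roots.toFinset, (jpoly α d).leadingCoeff, by omega,
    leadingCoeff_ne_zero.mpr hne, ?_⟩
  conv_lhs => rw [← C_leadingCoeff_mul_prod_multiset_X_sub_C hrc]
  rw [Finset.prod_multiset_map_count]
  congr 1
  refine Finset.prod_congr rfl fun x hx => ?_
  rw [Multiset.count_eq_one_of_mem hnd (Multiset.mem_toFinset.mp hx), pow_one]

open Polynomial in
/-- Newton's identities up to order four for the coefficients of `∏ (1 + b X)`. -/
theorem newton_four (T : Finset ℝ) (b : ℝ → ℝ) :
    let g : ℝ[X] := ∏ a ∈ T, (1 + C (b a) * X)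
    g.coeff 0 = 1 ∧ ∑ a ∈ T, b a = g.coeff 1 ∧
    ∑ a ∈ T, b a ^ 2 = g.coeff 1 ^ 2 - 2 * g.coeff 2 ∧
    ∑ a ∈ T, b a ^ 3 = g.coeff 1 ^ 3 - 3 * g.coeff 1 * g.coeff 2 + 3 * g.coeff 3 ∧
    ∑ a ∈ T, b a ^ 4 = g.coeff 1 ^ 4 - 4 * g.coeff 1 ^ 2 * g.coeff 2 + 2 * g.coeff 2 ^ 2
      + 4 * g.coeff 1 * g.coeff 3 - 4 * g.coeff 4 := by
  classical
  induction T using Finset.induction_on with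
  | empty => simp [coeff_one]
  | insert x T hx ih =>
    simp only at ih ⊢
    rw [Finset.prod_insert hx]
    set g : ℝ[X] := ∏ a ∈ T, (1 + C (b a) * X) with hg
    obtain ⟨i0, i1, i2, i3, i4⟩ := ih
    have e : (1 + C (b x) * X) * g = g + C (b x) * (X * g) := by ring
    have k0 : ((1 + C (b x) * X) * g).coeff 0 = 1 := by rw [e]; simp [i0]
    have kk : ∀ n, ((1 + C (b x) * X) * g).coeff (n + 1) = g.coeff (n + 1) + b x * g.coeff n := by
      intro n; rw [e, coeff_add, coeff_C_mul, coeff_X_mul]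
    have k1 := kk 0
    have k2 := kk 1
    have k3 := kk 2
    have k4 := kk 3
    norm_num at k1 k2 k3 k4
    rw [i0] at k1
    rw [Finset.sum_insert hx, Finset.sum_insert hx, Finset.sum_insert hx, Finset.sum_insert hx,
      k0, k1, k2, k3, k4, i1, i2, i3, i4]
    refine ⟨rfl, ?_, ?_, ?_, ?_⟩ <;> ring

theorem root_algebra (A L u x w c1 c2 c3 c4 : ℝ) (hw : w = 1 - x ^ 2)
    (hu : 3 * u = (L - 2 * A) - (L + A ^ 2 + 2 * A) * x ^ 2)
    (r0 : w * (c1 * 2) - 2 * A * x = 0)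
    (r1 : w * (c2 * 3 * 2) - 2 * x * (c1 * 2) - 2 * A - 2 * A * x * (c1 * 2) + L = 0)
    (r2 : w * (c3 * 4 * 3) - 2 * x * (c2 * 3 * 2) - c1 * 2 - 2 * A * (c1 * 2) -
        2 * A * x * (c2 * 3) + L * c1 = 0)
    (r3 : w * (c4 * 5 * 4) - 2 * x * (c3 * 4 * 3) - c2 * 3 * 2 - 2 * A * (c2 * 3) -
        2 * A * x * (c3 * 4) + L * c2 = 0) :
    w ^ 2 * (c1 ^ 2 - 2 * c2) = u ∧
    2 * (w ^ 3 * (c1 ^ 3 - 3 * c1 * c2 + 3 * c3)) = x * (A ^ 2 + A * (1 - x ^ 2) - 3 * u) ∧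
    5 * (w ^ 4 * (c1 ^ 4 - 4 * c1 ^ 2 * c2 + 2 * c2 ^ 2 + 4 * c1 * c3 - 4 * c4)) =
      (u ^ 2 + u * (2 * A * (1 + x ^ 2) + 3 + 9 * x ^ 2)
        - x ^ 2 * (A ^ 2 * (1 - x ^ 2) + 4 * A ^ 2 + 4 * A * (1 - x ^ 2))) := by
  have hu' : u = ((L - 2 * A) - (L + A ^ 2 + 2 * A) * x ^ 2) / 3 := by linarith
  have q1 : w * c1 = A * x := by linarith
  have q2 : w ^ 2 * c2 = (4 * x * (1 + A) * (A * x) + (2 * A - L) * w) / 6 := by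
    rw [← q1]; linear_combination (w / 6) * r1
  have q3 : w ^ 3 * c3 = ((12 * x + 6 * A * x) * (w ^ 2 * c2) + (2 + 4 * A - L) * w * (w * c1)) / 12 := by
    linear_combination (w ^ 2 / 12) * r2
  have q4 : w ^ 4 * c4 = ((24 * x + 8 * A * x) * (w ^ 3 * c3)
      + (6 + 6 * A - L) * w * (w ^ 2 * c2)) / 20 := by
    linear_combination (w ^ 3 / 20) * r3
  rw [q2, q1] at q3
  rw [q3, q2] at q4
  refine ⟨?_, ?_, ?_⟩
  · have : w ^ 2 * (c1 ^ 2 - 2 * c2) = (w * c1) ^ 2 - 2 * (w ^ 2 * c2) := by ring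
    rw [this, q1, q2, hu', hw]; ring
  · have : w ^ 3 * (c1 ^ 3 - 3 * c1 * c2 + 3 * c3)
      = (w * c1) ^ 3 - 3 * (w * c1) * (w ^ 2 * c2) + 3 * (w ^ 3 * c3) := by ring
    rw [this, q1, q2, q3, hu', hw]; ring
  · have : w ^ 4 * (c1 ^ 4 - 4 * c1 ^ 2 * c2 + 2 * c2 ^ 2 + 4 * c1 * c3 - 4 * c4)
      = (w * c1) ^ 4 - 4 * (w * c1) ^ 2 * (w ^ 2 * c2) + 2 * (w ^ 2 * c2) ^ 2
        + 4 * (w * c1) * (w ^ 3 * c3) - 4 * (w ^ 4 * c4) := by ring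
    rw [this, q1, q2, q3, q4, hu', hw]; ring

open Polynomial in
/-- The key inequality satisfied by any root. -/
theorem jpoly_root_ineq (α : ℝ) (hα : 0 < α) (m : ℕ) (hm : 1 ≤ m) (x : ℝ)
    (hx : (jpoly α (m + 1)).eval x = 0) (A L u : ℝ) (hA : A = α + 1)
    (hL : L = ((m:ℝ) + 1) * (m + 2 + 2 * α))
    (hu : 3 * u = (L - 2 * A) - (L + A ^ 2 + 2 * A) * x ^ 2) :
    0 < u ∧ 5 * x ^ 2 * (A ^ 2 + A * (1 - x ^ 2) - 3 * u) ^ 2 ≤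
      4 * u * (u ^ 2 + u * (2 * A * (1 + x ^ 2) + 3 + 9 * x ^ 2)
        - x ^ 2 * (A ^ 2 * (1 - x ^ 2) + 4 * A ^ 2 + 4 * A * (1 - x ^ 2))) := by
  classical
  obtain ⟨T, k, hT, hk, hfac⟩ := jpoly_factor α hα (m + 1)
  have hxT : x ∈ T := by
    rw [hfac, eval_mul, eval_C, eval_prod] at hx
    have := (mul_eq_zero.mp hx).resolve_left hk
    obtain ⟨a, ha, h⟩ := Finset.prod_eq_zero_iff.mp this
    simp at h
    have : x = a := by linarith
    rwa [this]
  let b : ℝ → ℝ := fun a => 1 / (x - a)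
  set T' := T.erase x with hT'
  have hne : ∀ a ∈ T', x - a ≠ 0 := by
    intro a ha h
    have := (Finset.mem_erase.mp ha).1
    exact this (by linarith)
  have hcard : T'.card = m := by rw [hT', Finset.card_erase_of_mem hxT, hT]; simp
  set g : ℝ[X] := ∏ a ∈ T', (1 + C (b a) * X) with hg
  set k' : ℝ := k * ∏ a ∈ T', (x - a) with hk'
  have hk'0 : k' ≠ 0 := mul_ne_zero hk (Finset.prod_ne_zero_iff.mpr hne)
  have hY : (jpoly α (m + 1)).comp (X + C x) = C k' * (X * g) := by
    rw [hfac, ← Finset.mul_prod_erase T _ hxT, ← hT', mul_comp, mul_comp, C_comp, prod_comp, hk', hg,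
      C_mul, map_prod]
    have : ∏ a ∈ T', (X - C a).comp (X + C x)
        = (∏ a ∈ T', C (x - a)) * ∏ a ∈ T', (1 + C (b a) * X) := by
      rw [← Finset.prod_mul_distrib]
      refine Finset.prod_congr rfl fun a ha => ?_
      have h1 : C (x - a) * C (b a) = (1 : ℝ[X]) := by
        rw [← C_mul]; simp only [b]; rw [mul_one_div_cancel (hne a ha), C_1]
      simp only [sub_comp, X_comp, C_comp]
      rw [mul_add, ← mul_assoc, h1, C_sub]; ring
    rw [this]
    simp only [sub_comp, X_comp, C_comp]
    ring
  have hode := congrArg (fun p => p.comp (X + C x)) (jpoly_ode α m)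
  have hD : ∀ p : ℝ[X], (derivative p).comp (X + C x) = derivative (p.comp (X + C x)) := by
    intro p; rw [derivative_comp]; simp
  simp only [add_comp, sub_comp, mul_comp, C_comp, X_comp, zero_comp, one_comp, pow_comp, hD, hY,
    derivative_C_mul, ← hL, ← hA] at hode
  set Z : ℝ[X] := X * g with hZ
  have hode2 : C k' * (C (1 - x ^ 2) * derivative (derivative Z)
      - C (2 * x) * (X * derivative (derivative Z)) - X * (X * derivative (derivative Z))
      - C (2 * A) * (X * derivative Z) - C (2 * A * x) * derivative Z + C L * Z) = 0 := by
    rw [← hode]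
    simp only [C_mul, C_sub, C_1, C_pow, map_ofNat]
    ring
  have hode3 := (mul_eq_zero.mp hode2).resolve_left (C_ne_zero.mpr hk'0)
  obtain ⟨g0, -, s2, s3, s4⟩ := newton_four T' b
  rw [← hg] at g0 s2 s3 s4
  have z0 : Z.coeff 0 = 0 := by simp [hZ]
  have zz : ∀ n, Z.coeff (n + 1) = g.coeff n := fun n => by rw [hZ, coeff_X_mul]
  have z1 := zz 0
  have z2 := zz 1
  have z3 := zz 2
  have z4 := zz 3
  have z5 := zz 4
  norm_num at z1 z2 z3 z4 z5
  have r0 := congrArg (fun p => coeff p 0) hode3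
  have r0' : (1 - x ^ 2) * (g.coeff 1 * 2) - 2 * A * x = 0 := by
    simp only [coeff_add, coeff_sub, coeff_C_mul, coeff_derivative, coeff_zero] at r0
    norm_num [coeff_derivative, mul_coeff_zero, z0, z1, z2, g0] at r0
    linarith
  have r1 := congrArg (fun p => coeff p 1) hode3
  have r2 := congrArg (fun p => coeff p 2) hode3
  have r3 := congrArg (fun p => coeff p 3) hode3
  simp only [coeff_add, coeff_sub, coeff_C_mul, coeff_derivative, coeff_X_mul, coeff_zero,
    mul_coeff_zero, coeff_X_zero] at r1 r2 r3
  norm_num [coeff_X_mul, coeff_derivative, mul_coeff_zero, z0, z1, z2, z3, z4, z5, g0, show ∀ p : ℝ[X], coeff (X * p) 1 = coeff p 0 from fun p => coeff_X_mul p 0, show ∀ p : ℝ[X], coeff (X * p) 2 = coeff p 1 from fun p => coeff_X_mul p 1, show ∀ p : ℝ[X], coeff (X * p) 3 = coeff p 2 from fun p => coeff_X_mul p 2] at r1 r2 r3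
  obtain ⟨t2, t3, t4⟩ := root_algebra A L u x (1 - x ^ 2) _ _ _ _ rfl hu r0' r1 r2 r3
  rw [← s2] at t2
  rw [← s3] at t3
  rw [← s4] at t4
  have hA0 : A ≠ 0 := by rw [hA]; linarith
  have hw : 1 - x ^ 2 ≠ 0 := by
    intro h
    rw [h] at r0'
    have : x = 0 := by
      have : A * x = 0 := by linarith
      exact (mul_eq_zero.mp this).resolve_left hA0
    rw [this] at h
    norm_num at h
  have hpos : 0 < ∑ a ∈ T', b a ^ 2 := by
    apply Finset.sum_pos
    · intro a ha
      have : b a ≠ 0 := one_div_ne_zero (hne a ha)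
      positivity
    · rw [← Finset.card_pos]; omega
  refine ⟨by rw [← t2]; positivity, ?_⟩
  have cs := Finset.sum_mul_sq_le_sq_mul_sq T' (fun a => b a) (fun a => b a ^ 2)
  have e1 : ∑ a ∈ T', b a * b a ^ 2 = ∑ a ∈ T', b a ^ 3 :=
    Finset.sum_congr rfl fun a _ => by ring
  have e2 : ∑ a ∈ T', (b a ^ 2) ^ 2 = ∑ a ∈ T', b a ^ 4 :=
    Finset.sum_congr rfl fun a _ => by ring
  rw [e1, e2] at cs
  have := mul_le_mul_of_nonneg_left cs (show 0 ≤ 20 * ((1 - x ^ 2) ^ 3) ^ 2 by positivity)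
  calc 5 * x ^ 2 * (A ^ 2 + A * (1 - x ^ 2) - 3 * u) ^ 2
      = 5 * (x * (A ^ 2 + A * (1 - x ^ 2) - 3 * u)) ^ 2 := by ring
    _ = 20 * ((1 - x ^ 2) ^ 3) ^ 2 * (∑ a ∈ T', b a ^ 3) ^ 2 := by rw [← t3]; ring
    _ ≤ _ := this
    _ = _ := by rw [← t4]; rw [← t2]; ring

set_option maxHeartbeats 1000000 in
/-- The final contradiction, given a cubic bound on `u + A (1 + X)`. -/
theorem final_contra (R A X p : ℝ) (hA : 1 ≤ A) (hX0 : 0 ≤ X) (hX1 : X < 1) (hp : 0 < p)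
    (hR : R ≤ 5/4 ∨ (R ≤ 39/25 ∧ p ≤ 39/20)) (hR0 : 0 < R)
    (hv : (1 + X + p) ^ 3 ≤ R * (X * A))
    (hH : 5/4 * X * (A + (1 - X)) ^ 2 ≤ A * p ^ 2 * (p + 2 + 2 * X) + (3 - 9/4 * X) * p ^ 2
      + X * p * (5/2 * A + A * X + 7/2 * (1 - X))) : False := by
  have hR2 : R ≤ 39/25 := by rcases hR with h | h <;> [linarith; exact h.1]
  have hXpos : 0 < X := by
    rcases hX0.lt_or_eq with h | h
    · exact h
    · rw [← h] at hv
      have : 0 < (1 + 0 + p) ^ 3 := by positivity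
      simp at hv; simp at this; linarith
  have hA4 : 43/10 ≤ A := by
    have h1 : (1 + X) ^ 3 ≤ (1 + X + p) ^ 3 :=
      pow_le_pow_left₀ (by linarith) (by linarith) 3
    have h2 : 27/4 * X ≤ (1 + X) ^ 3 := by nlinarith [mul_nonneg (sq_nonneg (X - 1/2)) (by linarith : 0 ≤ X + 4)]
    have h3 : R * (X * A) ≤ 39/25 * (X * A) := by gcongr
    have h4 : X * (27/4) ≤ X * (39/25 * A) := by linarith
    have := le_of_mul_le_mul_left h4 hXpos
    linarith
  -- upper bound for the right-hand side
  have k1 : (3 - 9/4 * X) * p ^ 2 ≤ 7/10 * A * p ^ 2 := by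
    apply mul_le_mul_of_nonneg_right _ (by positivity); linarith
  have k2 : X * p * (7/2 * (1 - X)) ≤ 21/100 * A * p := by
    have : X * (1 - X) ≤ 1/4 := by nlinarith [sq_nonneg (X - 1/2)]
    have : X * (7/2 * (1 - X)) ≤ 21/100 * A := by linarith
    nlinarith
  have k3 : 5/4 * X * A ^ 2 ≤ A * (p ^ 3 + (27/10 + 2 * X) * p ^ 2 + (5/2 * X + X ^ 2 + 21/100) * p) := by
    have : 5/4 * X * A ^ 2 ≤ 5/4 * X * (A + (1 - X)) ^ 2 := by gcongr; linarith
    nlinarith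
  have k4 : 5/4 * (X * A) ≤ p ^ 3 + (27/10 + 2 * X) * p ^ 2 + (5/2 * X + X ^ 2 + 21/100) * p := by
    have : A * (5/4 * (X * A)) ≤ A * (p ^ 3 + (27/10 + 2 * X) * p ^ 2 + (5/2 * X + X ^ 2 + 21/100) * p) := by
      linarith
    exact le_of_mul_le_mul_left this (by linarith)
  have hB : 0 ≤ X * A := by positivity
  rcases hR with h | ⟨h, h2⟩
  · have k5 : (1 + X + p) ^ 3 ≤ 5/4 * (X * A) := hv.trans (by gcongr)
    have e1 : 0 < p ^ 2 := by positivity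
    have e2 : 0 < X * p := by positivity
    have e3 : 0 < X * p ^ 2 := by positivity
    have e4 : 0 < X ^ 2 * p := by positivity
    have e5 : 0 < X ^ 2 := by positivity
    have e6 : 0 < X ^ 3 := by positivity
    linarith
  · have k5 : (1 + X + p) ^ 3 ≤ 39/25 * (X * A) := hv.trans (by gcongr)
    have e1 : 0 < p ^ 2 := by positivity
    have e2 : 0 < X * p := by positivity
    have e3 : 0 < X * p ^ 2 := by positivity
    have e4 : 0 < X ^ 2 * p := by positivity
    have e5 : 0 < X ^ 2 := by positivity
    have e6 : 0 < X ^ 3 := by positivity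
    have f1 : p ^ 2 ≤ 39/20 * p := by rw [sq]; exact mul_le_mul_of_nonneg_right h2 hp.le
    have f2 : p ^ 3 ≤ (39/20) ^ 2 * p := by
      have : p ^ 3 = p * p ^ 2 := by ring
      have h7 : p * p ^ 2 ≤ p * (39/20 * p) := by gcongr
      linarith
    linarith

theorem s_bound (n A L s : ℝ) (N t : ℝ) (hN : 1 ≤ N) (hn : N ≤ n) (hA : 1 ≤ A) (hL : L = n * (n + 2 * A - 1))
    (hs : 8 * L ^ 2 * (n + A) ^ 2 * s ^ 3 ≤ 27 * A ^ 4) (hs0 : 0 < s) (ht : 27 < 32 * N ^ 2 * t ^ 3)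
    (ht0 : 0 ≤ t) : s < t := by
  have hL2 : 2 * N * A ≤ L := by rw [hL]; nlinarith
  have h1 : 2 * N * A ^ 2 ≤ L * (n + A) := by
    have : 2 * N * A * A ≤ L * (n + A) := by
      apply mul_le_mul hL2 (by linarith) (by linarith) (le_trans (by positivity) hL2)
    linarith
  have h2 : (2 * N * A ^ 2) ^ 2 ≤ (L * (n + A)) ^ 2 := by gcongr
  have h3 : A ^ 4 * (32 * N ^ 2 * s ^ 3) ≤ A ^ 4 * 27 := by
    have : (2 * N * A ^ 2) ^ 2 * (8 * s ^ 3) ≤ (L * (n + A)) ^ 2 * (8 * s ^ 3) := by gcongr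
    nlinarith
  have h4 := le_of_mul_le_mul_left h3 (by positivity)
  by_contra hc
  push Not at hc
  have : t ^ 3 ≤ s ^ 3 := by gcongr
  have : 32 * N ^ 2 * t ^ 3 ≤ 32 * N ^ 2 * s ^ 3 := by gcongr
  linarith

/-- The cubic bound for `v`. -/
theorem v_bound (n A L s v N : ℝ) (hN : 1 ≤ N) (hn : N ≤ n) (hA : 1 ≤ A)
    (hL : L = n * (n + 2 * A - 1))
    (hs : 8 * L ^ 2 * (n + A) ^ 2 * s ^ 3 ≤ 27 * A ^ 4) (hs0 : 0 < s) (hs1 : s < 1)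
    (hv : 3 * v = (L + A) * (2 * s - s ^ 2)) :
    v ^ 3 * (n + A) ^ 2 ≤ (1 + 1 / (2 * N)) ^ 2 * (L + A) * (1 - s / 2) ^ 3 * A ^ 4 := by
  have hL2 : 2 * N * A ≤ L := by rw [hL]; nlinarith
  have hLpos : 0 < L := lt_of_lt_of_le (by positivity) hL2
  have h1 : L + A ≤ (1 + 1 / (2 * N)) * L := by
    have : A ≤ 1 / (2 * N) * L := by
      rw [one_div, inv_mul_eq_div, le_div_iff₀ (by positivity)]; linarith
    linarith
  have hv' : v = (L + A) * (2 * s - s ^ 2) / 3 := by linarith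
  have e1 : 0 ≤ (L + A) ^ 3 * (1 - s / 2) ^ 3 := by
    have : 0 < 1 - s / 2 := by linarith
    positivity
  have h2 : L ^ 2 * (v ^ 3 * (n + A) ^ 2) ≤ (L + A) ^ 3 * (1 - s / 2) ^ 3 * A ^ 4 := by
    have := mul_le_mul_of_nonneg_left hs e1
    rw [hv']
    nlinarith
  have h3 : (L + A) ^ 2 ≤ ((1 + 1 / (2 * N)) * L) ^ 2 := by gcongr
  have h4 : L ^ 2 * (v ^ 3 * (n + A) ^ 2) ≤
      L ^ 2 * ((1 + 1 / (2 * N)) ^ 2 * (L + A) * (1 - s / 2) ^ 3 * A ^ 4) := by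
    have e2 : 0 ≤ (L + A) * (1 - s / 2) ^ 3 * A ^ 4 := by
      have : 0 < 1 - s / 2 := by linarith
      positivity
    have := mul_le_mul_of_nonneg_right h3 e2
    calc _ ≤ _ := h2
      _ = (L + A) ^ 2 * ((L + A) * (1 - s / 2) ^ 3 * A ^ 4) := by ring
      _ ≤ _ := this
      _ = _ := by ring
  exact le_of_mul_le_mul_left h4 (by positivity)

set_option maxHeartbeats 1000000 in
theorem analytic_part (n A L s X u : ℝ) (hn : 5 ≤ n) (hn' : n ≤ 10 ∨ 11 ≤ n) (hA : 1 ≤ A)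
    (hL : L = n * (n + 2 * A - 1)) (hs1 : s < 1) (hX0 : 0 ≤ X)
    (hs : 8 * L ^ 2 * (n + A) ^ 2 * s ^ 3 ≤ 27 * A ^ 4)
    (hX : X * ((n + A) * (n + A - 1)) = (L + A) * (1 - s) ^ 2)
    (hu : 3 * u = (L - 2 * A) - (L + A ^ 2 + 2 * A) * X) (hu0 : 0 < u)
    (hH : 5 * X * (A ^ 2 + A * (1 - X) - 3 * u) ^ 2 ≤
      4 * u * (u ^ 2 + u * (2 * A * (1 + X) + 3 + 9 * X)
        - X * (A ^ 2 * (1 - X) + 4 * A ^ 2 + 4 * A * (1 - X)))) : False := by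
  have hL2 : 10 * A ≤ L := by rw [hL]; nlinarith
  set p := u / A with hp
  have hup : u = A * p := by rw [hp]; field_simp
  have hp0 : 0 < p := by positivity
  have hX1 : X < 1 := by
    by_contra hc
    push Not at hc
    nlinarith
  set v := A * (1 + X + p) with hvdef
  have hv : 3 * v = (L + A) * (2 * s - s ^ 2) := by
    have : 3 * v = 3 * u + 3 * A * (1 + X) := by rw [hvdef, hup]; ring
    rw [this, hu]
    linear_combination (-1) * hX - X * hL
  have hvpos : 0 < v := by positivity
  have hs0 : 0 < s := by
    by_contra hc
    push Not at hc
    have : (L + A) * (2 * s - s ^ 2) ≤ 0 := by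
      apply mul_nonpos_of_nonneg_of_nonpos (by linarith); nlinarith
    linarith
  have hH' : 5/4 * X * (A + (1 - X)) ^ 2 ≤ A * p ^ 2 * (p + 2 + 2 * X) + (3 - 9/4 * X) * p ^ 2
      + X * p * (5/2 * A + A * X + 7/2 * (1 - X)) := by
    rw [hup] at hH
    have hA2 : 0 < 4 * A ^ 2 := by positivity
    refine le_of_mul_le_mul_left ?_ hA2
    linarith
  have hw1 : 0 < (1 - s) ^ 2 := by
    have : 0 < 1 - s := by linarith
    positivity
  have hX' : (L + A) * (1 - s) ^ 2 ≤ X * (n + A) ^ 2 := by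
    rw [← hX]; nlinarith
  have hLA : 0 < L + A := by linarith
  have hnA : 0 < (n + A) ^ 2 := by positivity
  -- from a bound on the ratio to the required cubic inequality
  have fin : ∀ R : ℝ, 0 < R → v ^ 3 * (n + A) ^ 2 ≤ R * ((L + A) * (1 - s) ^ 2) * A ^ 4 →
      (1 + X + p) ^ 3 ≤ R * (X * A) := by
    intro R hR h
    have h1 : (n + A) ^ 2 * A ^ 3 * (1 + X + p) ^ 3 ≤ (n + A) ^ 2 * A ^ 3 * (R * (X * A)) := by
      calc (n + A) ^ 2 * A ^ 3 * (1 + X + p) ^ 3 = v ^ 3 * (n + A) ^ 2 := by rw [hvdef]; ring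
        _ ≤ R * ((L + A) * (1 - s) ^ 2) * A ^ 4 := h
        _ ≤ R * (X * (n + A) ^ 2) * A ^ 4 := by gcongr
        _ = _ := by ring
    exact le_of_mul_le_mul_left h1 (by positivity)
  rcases hn' with h10 | h11
  · have hsb := s_bound n A L s 5 (324/1000) (by norm_num) hn hA hL hs hs0 (by norm_num) (by norm_num)
    have hvb := v_bound n A L s v 5 (by norm_num) hn hA hL hs hs0 hs1 hv
    norm_num at hvb
    have g : 121/100 * (1 - s / 2) ^ 3 ≤ 39/25 * (1 - s) ^ 2 := by
      have h8 : (0:ℝ) ≤ (39/25 - 121/100*3/4) + 121/800 * (s + 648/1000) := by linarith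
      have h9 := mul_nonneg (sq_nonneg (s - 324/1000)) h8
      linarith
    have c1 : v ^ 3 * (n + A) ^ 2 ≤ 39/25 * ((L + A) * (1 - s) ^ 2) * A ^ 4 := by
      have : (L + A) * A ^ 4 * (121/100 * (1 - s / 2) ^ 3) ≤ (L + A) * A ^ 4 * (39/25 * (1 - s) ^ 2) := by
        gcongr
      linarith
    have hpb : p ≤ 39/20 := by
      have g1 : (1 - s / 2) ^ 3 ≤ 1 := pow_le_one₀ (by linarith) (by linarith)
      have g2 : A * (L + A) ≤ 21 * (n + A) ^ 2 := by
        rw [hL]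
        nlinarith [mul_nonneg (sq_nonneg A) (by linarith : (0:ℝ) ≤ 10 - n),
          mul_nonneg (mul_nonneg (by linarith : (0:ℝ) ≤ n) (by linarith : (0:ℝ) ≤ A))
            (by linarith : (0:ℝ) ≤ 42 - n), sq_nonneg n,
          mul_nonneg (by linarith : (0:ℝ) ≤ n) (by linarith : (0:ℝ) ≤ A)]
      have g3 : (n + A) ^ 2 * A ^ 3 * (1 + X + p) ^ 3 ≤ (n + A) ^ 2 * A ^ 3 * (121/100 * 21) := by
        calc (n + A) ^ 2 * A ^ 3 * (1 + X + p) ^ 3 = v ^ 3 * (n + A) ^ 2 := by rw [hvdef]; ring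
          _ ≤ 121/100 * (L + A) * (1 - s / 2) ^ 3 * A ^ 4 := hvb
          _ ≤ 121/100 * (L + A) * 1 * A ^ 4 := by gcongr
          _ = 121/100 * A ^ 3 * (A * (L + A)) := by ring
          _ ≤ 121/100 * A ^ 3 * (21 * (n + A) ^ 2) := by gcongr
          _ = _ := by ring
      have g4 := le_of_mul_le_mul_left g3 (by positivity)
      by_contra hc
      push Not at hc
      have : (59/20 : ℝ) ^ 3 ≤ (1 + X + p) ^ 3 := by gcongr; linarith
      norm_num at this
      linarith
    exact final_contra (39/25) A X p hA hX0 hX1 hp0 (Or.inr ⟨le_rfl, hpb⟩) (by norm_num)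
      (fin _ (by norm_num) c1) hH'
  · have hsb := s_bound n A L s 11 (192/1000) (by norm_num) h11 hA hL hs hs0 (by norm_num) (by norm_num)
    have hvb := v_bound n A L s v 11 (by norm_num) h11 hA hL hs hs0 hs1 hv
    norm_num at hvb
    have g : 529/484 * (1 - s / 2) ^ 3 ≤ 5/4 * (1 - s) ^ 2 := by
      have h8 : (0:ℝ) ≤ (5/4 - 529/484*3/4) + 529/3872 * (s + 384/1000) := by linarith
      have h9 := mul_nonneg (sq_nonneg (s - 192/1000)) h8
      linarith
    have c1 : v ^ 3 * (n + A) ^ 2 ≤ 5/4 * ((L + A) * (1 - s) ^ 2) * A ^ 4 := by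
      have : (L + A) * A ^ 4 * (529/484 * (1 - s / 2) ^ 3) ≤ (L + A) * A ^ 4 * (5/4 * (1 - s) ^ 2) := by
        gcongr
      linarith
    exact final_contra (5/4) A X p hA hX0 hX1 hp0 (Or.inl le_rfl) (by norm_num)
      (fin _ (by norm_num) c1) hH'

/-- Krasikov's bound on the largest Jacobi root. -/
theorem jacobi_max_root_upper_bound (d : ℕ) (hd : 5 ≤ d) (α : ℝ) (hα : 0 < α) :
    maxRoot α α d <
      Real.sqrt (1 - qda d α) *
        (1 - 3 * (α + 1) ^ ((4 : ℝ) / 3) /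
          (2 * (d : ℝ) ^ ((2 : ℝ) / 3) * ((d : ℝ) + α + 1) ^ ((2 : ℝ) / 3) *
            ((d : ℝ) + 2 * α + 1) ^ ((2 : ℝ) / 3))) := by
  obtain ⟨m, rfl⟩ : ∃ m, d = m + 1 := ⟨d - 1, by omega⟩
  have hroot : (jpoly α (m + 1)).eval (maxRoot α α (m + 1)) = 0 := by
    rw [jpoly_eval]
    have hmem : maxRoot α α (m + 1) ∈ {x : ℝ | jacobiP α α (m + 1) x = 0} := by
      have hset : {x : ℝ | jacobiP α α (m + 1) x = 0} = (jpoly α (m + 1)).roots.toFinset := by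
        have hne : jpoly α (m + 1) ≠ 0 := by
          intro h; apply jpoly_eval_one α hα (m + 1); rw [h]; simp
        ext x
        simp only [Set.mem_ofPred_eq, Finset.mem_coe, Multiset.mem_toFinset]
        rw [Polynomial.mem_roots hne, Polynomial.IsRoot, jpoly_eval]
      apply Set.Nonempty.csSup_mem
      · obtain ⟨z, -, -, -, hz⟩ := jpoly_roots_seq (m + 1) α hα
        refine ⟨z 1, ?_⟩
        have := hz 1 le_rfl (by omega)
        rwa [jpoly_eval] at this
      · rw [hset]; exact Finset.finite_toSet _
    exact hmem
  set x := maxRoot α α (m + 1)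
  by_contra hcon
  push Not at hcon
  set n : ℝ := ((m + 1 : ℕ) : ℝ) with hn
  have hn5 : 5 ≤ n := by rw [hn]; exact_mod_cast hd
  have hnm : n = m + 1 := by rw [hn]; push_cast; ring
  set A := α + 1 with hA
  set L := n * (n + 2 * A - 1) with hL
  set δ := 3 * A ^ ((4 : ℝ) / 3) / (2 * n ^ ((2 : ℝ) / 3) * (n + α + 1) ^ ((2 : ℝ) / 3) *
            (n + 2 * α + 1) ^ ((2 : ℝ) / 3)) with hδ
  have hA0 : 1 ≤ A := by linarith
  have hL10 : 10 * A ≤ L := by rw [hL]; nlinarith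
  have hcube : ∀ y : ℝ, 0 < y → (y ^ ((2 : ℝ) / 3)) ^ 3 = y ^ 2 := by
    intro y hy
    rw [← Real.rpow_natCast, ← Real.rpow_mul hy.le, ← Real.rpow_natCast]; norm_num
  have hcube4 : (A ^ ((4 : ℝ) / 3)) ^ 3 = A ^ 4 := by
    rw [← Real.rpow_natCast, ← Real.rpow_mul (by linarith), ← Real.rpow_natCast]; norm_num
  have hδ3 : 8 * L ^ 2 * (n + A) ^ 2 * δ ^ 3 = 27 * A ^ 4 := by
    rw [hδ, hL]
    simp only [div_pow, mul_pow]
    rw [hcube n (by linarith), hcube (n + α + 1) (by linarith),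
      hcube (n + 2 * α + 1) (by linarith), hcube4]
    have h1 : n + 2 * A - 1 = n + 2 * α + 1 := by rw [hA]; ring
    have h2 : n + A = n + α + 1 := by rw [hA]; ring
    rw [h1, h2]
    have : 0 < n := by linarith
    field_simp
    norm_num
  have hδ1 : δ < 1 := by
    by_contra hc
    push Not at hc
    have h1 : 1 ≤ δ ^ 3 := one_le_pow₀ hc
    have h2 : 10 * A * A ≤ L * (n + A) :=
      mul_le_mul hL10 (by linarith) (by linarith) (by linarith)
    have h3 : (10 * A * A) ^ 2 ≤ (L * (n + A)) ^ 2 := by gcongr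
    have h4 : 8 * (L * (n + A)) ^ 2 * 1 ≤ 8 * (L * (n + A)) ^ 2 * δ ^ 3 := by gcongr
    have h5 : 0 < A ^ 4 := by positivity
    nlinarith
  have hM : 0 < (n + A) * (n + A - 1) := mul_pos (by linarith) (by linarith)
  have hq : (1 - qda (m + 1) α) * ((n + A) * (n + A - 1)) = L + A := by
    unfold qda
    rw [← hn]
    have h1 : n + α ≠ 0 := by linarith
    have h2 : n + α + 1 ≠ 0 := by linarith
    rw [hL, hA]
    field_simp
    ring
  have hqpos : 0 < 1 - qda (m + 1) α := by
    by_contra hc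
    push Not at hc
    have := mul_nonpos_of_nonpos_of_nonneg hc hM.le
    linarith
  set r := Real.sqrt (1 - qda (m + 1) α) with hr
  have hr0 : 0 < r := Real.sqrt_pos.mpr hqpos
  have hr2 : r ^ 2 = 1 - qda (m + 1) α := Real.sq_sqrt hqpos.le
  have hx0 : 0 < x := lt_of_lt_of_le (mul_pos hr0 (by linarith)) hcon
  have hxs : x = r * (1 - (1 - x / r)) := by field_simp; ring
  set s := 1 - x / r with hs
  have hs1 : s < 1 := by rw [hs]; have : 0 < x / r := by positivity
                         linarith
  have hsδ : s ≤ δ := by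
    rw [hxs] at hcon
    have := le_of_mul_le_mul_left hcon hr0
    linarith
  have hs3 : 8 * L ^ 2 * (n + A) ^ 2 * s ^ 3 ≤ 27 * A ^ 4 := by
    rw [← hδ3]
    have : s ^ 3 ≤ δ ^ 3 := (Odd.strictMono_pow (by decide : Odd 3)).monotone hsδ
    gcongr
  obtain ⟨hu0, hH⟩ := jpoly_root_ineq α hα m (by omega) x hroot A L
    (((L - 2 * A) - (L + A ^ 2 + 2 * A) * x ^ 2) / 3) hA
    (by rw [hL, hnm, hA]; ring) (by ring)
  refine analytic_part n A L s (x ^ 2) _ hn5 ?_ hA0 hL hs1 (by positivity) hs3 ?_ (by ring) hu0 hH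
  · rcases Nat.lt_or_ge m 10 with h | h
    · left; rw [hnm]
      have : (m : ℝ) + 1 ≤ 10 := by exact_mod_cast h
      exact this
    · right; rw [hnm]
      have : (10 : ℝ) ≤ m := by exact_mod_cast h
      linarith
  · rw [← hq, ← hr2]
    have : x ^ 2 = r ^ 2 * (1 - s) ^ 2 := by rw [← mul_pow, ← hxs]
    rw [this]; ring
end
end

section
/- For every K ≥ 1 and ε ∈ (0,1) there exists C > 0 with the following property. Let n be a positive integer, d ≥ 2 an even integer and α ≥ sqrt(7/6) a real with d ≤ Kn, α ≤ Kn and q_{d,α} ∈ [ε, 1), and set s' := t_{1,d}^{α,α}. If 1−q_{d,α}−s'² ≥ n^{−2/3}, then for every x ∈ [0, sqrt(1−q_{d,α})] with 1−q_{d,α}−x² ≥ n^{−2/3} one has |ω_{d,α}(x) − ω_{d,α}(s') − A·(x−s') − B·(x−s')²| ≤ C·n²·|x−s'|³, where A := sqrt((d+α)(d+α+1))·sqrt(1−q_{d,α}−s'²)/(1−s'²) and B := s'·sqrt((d+α)(d+α+1))·(1−2q_{d,α}−s'²)/(2·sqrt(1−q_{d,α}−s'²)·(1−s'²)²). -/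
open MeasureTheory Filter Real

noncomputable section

/-- The phase function `ω_{d,α}`. -/
def omegada (d : ℕ) (α : ℝ) (x : ℝ) : ℝ :=
  Real.sqrt (((d : ℝ) + α) * ((d : ℝ) + α + 1)) *
    (Real.arccos (Real.sqrt ((1 - qda d α - x ^ 2) / (1 - qda d α))) -
      Real.sqrt (qda d α) *
        Real.arccos (Real.sqrt ((1 - qda d α - x ^ 2) / ((1 - qda d α) * (1 - x ^ 2)))))

lemma taylor_aux (f f1 f2 f3 : ℝ → ℝ) (s x M : ℝ)
    (h1 : ∀ y ∈ Set.uIcc s x, HasDerivAt f (f1 y) y)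
    (h2 : ∀ y ∈ Set.uIcc s x, HasDerivAt f1 (f2 y) y)
    (h3 : ∀ y ∈ Set.uIcc s x, HasDerivAt f2 (f3 y) y)
    (hM : ∀ y ∈ Set.uIcc s x, |f3 y| ≤ M) :
    |f x - f s - f1 s * (x - s) - f2 s / 2 * (x - s) ^ 2| ≤ M * |x - s| ^ 3 := by
  have hcv : Convex ℝ (Set.uIcc s x) := convex_uIcc s x
  have hs : s ∈ Set.uIcc s x := Set.left_mem_uIcc
  have hx : x ∈ Set.uIcc s x := Set.right_mem_uIcc
  have hM0 : 0 ≤ M := (abs_nonneg _).trans (hM s hs)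
  have hd : ∀ y ∈ Set.uIcc s x, |y - s| ≤ |x - s| := fun y hy =>
    Set.abs_sub_left_of_mem_uIcc hy
  have e2 : ∀ y ∈ Set.uIcc s x, |f2 y - f2 s| ≤ M * |x - s| := by
    intro y hy
    have := hcv.norm_image_sub_le_of_norm_hasDerivWithin_le (f := f2) (f' := f3) (C := M)
      (fun z hz => (h3 z hz).hasDerivWithinAt) hM hs hy
    exact this.trans (mul_le_mul_of_nonneg_left (hd y hy) hM0)
  have e1 : ∀ y ∈ Set.uIcc s x, |f1 y - f1 s - f2 s * (y - s)| ≤ M * |x - s| * |x - s| := by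
    intro y hy
    have := hcv.norm_image_sub_le_of_norm_hasDerivWithin_le
      (f := fun y => f1 y - f2 s * (y - s)) (f' := fun y => f2 y - f2 s) (C := M * |x - s|)
      (fun z hz => by
        have := (h2 z hz).sub (((hasDerivAt_id z).sub_const s).const_mul (f2 s))
        simp only [mul_one] at this
        exact this.hasDerivWithinAt) e2 hs hy
    have h' : f1 y - f2 s * (y - s) - (f1 s - f2 s * (s - s)) = f1 y - f1 s - f2 s * (y - s) := by
      ring
    rw [h'] at this
    exact this.trans (mul_le_mul_of_nonneg_left (hd y hy) (by positivity))
  have := hcv.norm_image_sub_le_of_norm_hasDerivWithin_le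
      (f := fun y => f y - f1 s * (y - s) - f2 s / 2 * (y - s) ^ 2)
      (f' := fun y => f1 y - f1 s - f2 s * (y - s)) (C := M * |x - s| * |x - s|)
      (fun z hz => by
        have := ((h1 z hz).sub (((hasDerivAt_id z).sub_const s).const_mul (f1 s))).sub
          ((((hasDerivAt_id z).sub_const s).pow 2).const_mul (f2 s / 2))
        refine HasDerivAt.hasDerivWithinAt ?_
        refine HasDerivAt.congr_deriv (f := fun y => f y - f1 s * (y - s) - f2 s / 2 * (y - s) ^ 2)
          this ?_
        simp
        ring) e1 hs hx
  have h' : f x - f1 s * (x - s) - f2 s / 2 * (x - s) ^ 2 -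
      (f s - f1 s * (s - s) - f2 s / 2 * (s - s) ^ 2)
      = f x - f s - f1 s * (x - s) - f2 s / 2 * (x - s) ^ 2 := by ring
  rw [h'] at this
  calc _ ≤ _ := this
    _ = _ := by rw [Real.norm_eq_abs]; ring

lemma jacobiP_neg (α : ℝ) (d : ℕ) (hd : Even d) (x : ℝ) :
    jacobiP α α d (-x) = jacobiP α α d x := by
  unfold jacobiP
  rw [← Finset.sum_range_reflect]
  refine Finset.sum_congr rfl fun s hs => ?_
  have hs' : s ≤ d := Nat.lt_succ_iff.mp (Finset.mem_range.mp hs)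
  have e1 : d + 1 - 1 - s = d - s := by omega
  have e2 : d - (d - s) = s := by omega
  rw [e1, e2]
  have a1 : (-x - 1) / 2 = -((x + 1) / 2) := by ring
  have a2 : (-x + 1) / 2 = -((x - 1) / 2) := by ring
  rw [a1, a2, neg_pow ((x + 1) / 2), neg_pow ((x - 1) / 2)]
  have hp : (-1 : ℝ) ^ (d - s) * (-1) ^ s = 1 := by
    rw [← pow_add, Nat.sub_add_cancel hs', hd.neg_one_pow]
  linear_combination (genBinom (↑d + α) s * genBinom (↑d + α) (d - s) *
    ((x + 1) / 2) ^ (d - s) * ((x - 1) / 2) ^ s) * hp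

lemma maxRoot_nonneg (α : ℝ) (d : ℕ) (hd : Even d) : 0 ≤ maxRoot α α d := by
  unfold maxRoot
  rcases Set.eq_empty_or_nonempty {x : ℝ | jacobiP α α d x = 0} with h | ⟨x, hx⟩
  · rw [h, Real.sSup_empty]
  · apply Real.sSup_nonneg'
    rcases le_total 0 x with h | h
    · exact ⟨x, hx, h⟩
    · exact ⟨-x, by simpa [jacobiP_neg α d hd] using hx, by linarith⟩

/-- smooth form of the phase -/
def smoothPhase (q y : ℝ) : ℝ :=
  arcsin (y / √(1 - q)) - √q * arcsin (√q * y / (√(1 - q) * √(1 - y ^ 2)))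

lemma arccos_sqrt_aux (u v : ℝ) (hu : 0 ≤ u) (hv : 0 ≤ v) (h : u ^ 2 + v = 1) :
    arccos (√v) = arcsin u := by
  rw [Real.arccos_eq_arcsin (Real.sqrt_nonneg _), Real.sq_sqrt hv]
  congr 1
  rw [← h, add_sub_cancel_right, Real.sqrt_sq hu]

lemma phase_eq (q y : ℝ) (hq0 : 0 < q) (hq1 : q < 1) (hy : 0 ≤ y) (hw : 0 < 1 - q - y ^ 2) :
    arccos (√((1 - q - y ^ 2) / (1 - q))) -
      √q * arccos (√((1 - q - y ^ 2) / ((1 - q) * (1 - y ^ 2)))) = smoothPhase q y := by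
  have h1 : 0 < 1 - q := by linarith
  have h2 : 0 < 1 - y ^ 2 := by linarith
  unfold smoothPhase
  rw [arccos_sqrt_aux (y / √(1 - q)) _ (by positivity) (by positivity),
    arccos_sqrt_aux (√q * y / (√(1 - q) * √(1 - y ^ 2))) _ (by positivity) (by positivity)]
  · rw [div_pow, mul_pow, mul_pow, Real.sq_sqrt h1.le, Real.sq_sqrt h2.le, Real.sq_sqrt hq0.le]
    field_simp
    ring
  · rw [div_pow, Real.sq_sqrt h1.le]
    field_simp
    ring

lemma phase_deriv (q y : ℝ) (hq0 : 0 < q) (hq1 : q < 1) (hw : 0 < 1 - q - y ^ 2) :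
    HasDerivAt (smoothPhase q) (√(1 - q - y ^ 2) / (1 - y ^ 2)) y := by
  have h1 : 0 < 1 - q := by linarith
  have h2 : 0 < 1 - y ^ 2 := by linarith
  obtain ⟨a, ha⟩ : ∃ a, a = √(1 - q) := ⟨_, rfl⟩
  obtain ⟨c, hc⟩ : ∃ c, c = √(1 - y ^ 2) := ⟨_, rfl⟩
  obtain ⟨b, hb⟩ : ∃ b, b = √q := ⟨_, rfl⟩
  obtain ⟨w, hww⟩ : ∃ w, w = √(1 - q - y ^ 2) := ⟨_, rfl⟩
  have a0 : 0 < a := ha ▸ Real.sqrt_pos.2 h1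
  have c0 : 0 < c := hc ▸ Real.sqrt_pos.2 h2
  have b0 : 0 < b := hb ▸ Real.sqrt_pos.2 hq0
  have w0 : 0 < w := hww ▸ Real.sqrt_pos.2 hw
  have a2 : a ^ 2 = 1 - q := by rw [ha, Real.sq_sqrt h1.le]
  have c2 : c ^ 2 = 1 - y ^ 2 := by rw [hc, Real.sq_sqrt h2.le]
  have b2 : b ^ 2 = q := by rw [hb, Real.sq_sqrt hq0.le]
  have w2 : w ^ 2 = 1 - q - y ^ 2 := by rw [hww, Real.sq_sqrt hw.le]
  have s1 : 1 - (y / a) ^ 2 = (w / a) ^ 2 := by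
    rw [div_pow, div_pow, eq_div_iff (by positivity), sub_mul, div_mul_cancel₀ _ (by positivity)]
    linarith
  have s2 : 1 - (b * y / (a * c)) ^ 2 = (w / (a * c)) ^ 2 := by
    rw [div_pow, div_pow, eq_div_iff (by positivity), sub_mul, div_mul_cancel₀ _ (by positivity)]
    rw [mul_pow, mul_pow, a2, b2, c2, w2]; ring
  have ne1 : ∀ u v : ℝ, 0 < v → 1 - u ^ 2 = v ^ 2 → u ≠ -1 ∧ u ≠ 1 := by
    intro u v hv h
    constructor <;> (rintro rfl; nlinarith)
  have p1 := ne1 _ _ (by positivity) s1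
  have p2 := ne1 _ _ (by positivity) s2
  have d1 : HasDerivAt (fun y => arcsin (y / a)) (1 / w) y := by
    have := (Real.hasDerivAt_arcsin p1.1 p1.2).comp y ((hasDerivAt_id y).div_const a)
    rw [s1, Real.sqrt_sq (by positivity)] at this
    refine HasDerivAt.congr_deriv this ?_
    field_simp
  have dp : HasDerivAt (fun y : ℝ => y ^ 2) (2 * y) y := by
    simpa using hasDerivAt_pow 2 y
  have dc : HasDerivAt (fun y => √(1 - y ^ 2)) (-y / c) y := by
    have := ((dp.const_sub 1)).sqrt h2.ne'
    refine HasDerivAt.congr_deriv this ?_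
    rw [← hc]
    field_simp
  have d2 : HasDerivAt (fun y => arcsin (b * y / (a * √(1 - y ^ 2)))) (b / (c ^ 2 * w)) y := by
    have hdiv := ((hasDerivAt_id y).const_mul b).div (dc.const_mul a) (by
      rw [← hc]; positivity)
    have := (Real.hasDerivAt_arcsin (x := b * y / (a * √(1 - y ^ 2)))
      (by rw [← hc]; exact p2.1) (by rw [← hc]; exact p2.2)).comp y hdiv
    rw [← hc, s2, Real.sqrt_sq (by positivity)] at this
    refine HasDerivAt.congr_deriv this ?_
    simp only [id]
    field_simp
    linear_combination c2
  have := d1.sub (d2.const_mul b)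
  unfold smoothPhase
  rw [← ha, ← hb]
  refine HasDerivAt.congr_deriv this ?_
  rw [← hww, ← c2]
  field_simp
  rw [w2, b2, c2]; ring

lemma phase_deriv2 (q y : ℝ) (hq0 : 0 < q) (hw : 0 < 1 - q - y ^ 2) :
    HasDerivAt (fun y => √(1 - q - y ^ 2) / (1 - y ^ 2))
      (y * (1 - 2 * q - y ^ 2) / (√(1 - q - y ^ 2) * (1 - y ^ 2) ^ 2)) y := by
  have h2 : 0 < 1 - y ^ 2 := by linarith
  have w0 := Real.sqrt_pos.2 hw
  have w2 := Real.sq_sqrt hw.le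
  have dp : HasDerivAt (fun y : ℝ => y ^ 2) (2 * y) y := by
    simpa using hasDerivAt_pow 2 y
  have := ((dp.const_sub (1 - q)).sqrt hw.ne').div (dp.const_sub 1) h2.ne'
  refine HasDerivAt.congr_deriv this ?_
  field_simp
  rw [w2]; ring

lemma phase_deriv3 (q y : ℝ) (hq0 : 0 < q) (hw : 0 < 1 - q - y ^ 2) :
    HasDerivAt (fun y => y * (1 - 2 * q - y ^ 2) / (√(1 - q - y ^ 2) * (1 - y ^ 2) ^ 2))
      (((1 - 2 * q - 3 * y ^ 2) * (1 - y ^ 2) * (1 - q - y ^ 2)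
        + 4 * y ^ 2 * (1 - 2 * q - y ^ 2) * (1 - q - y ^ 2)
        + y ^ 2 * (1 - 2 * q - y ^ 2) * (1 - y ^ 2)) /
        ((1 - q - y ^ 2) * √(1 - q - y ^ 2) * (1 - y ^ 2) ^ 3)) y := by
  have h2 : 0 < 1 - y ^ 2 := by linarith
  have w0 := Real.sqrt_pos.2 hw
  have w2 := Real.sq_sqrt hw.le
  have dp : HasDerivAt (fun y : ℝ => y ^ 2) (2 * y) y := by
    simpa using hasDerivAt_pow 2 y
  have := ((hasDerivAt_id y).mul (dp.const_sub (1 - 2 * q))).div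
    (((dp.const_sub (1 - q)).sqrt hw.ne').mul ((dp.const_sub 1).pow 2))
    (by simp only [Pi.mul_apply, Pi.pow_apply]; positivity)
  refine HasDerivAt.congr_deriv this ?_
  simp only [Pi.mul_apply, Pi.pow_apply, id]
  generalize √(1 - q - y ^ 2) = w at *
  rw [← w2]
  have e : q = 1 - y ^ 2 - w ^ 2 := by linarith
  subst e
  clear this w2 hq0 hw
  field_simp
  push_cast
  ring

lemma phase_bound (q y ε r : ℝ) (hε : 0 < ε) (hq0 : ε ≤ q) (hq1 : q < 1) (hr : 0 < r)
    (hw : r ^ 2 ≤ 1 - q - y ^ 2) :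
    |((1 - 2 * q - 3 * y ^ 2) * (1 - y ^ 2) * (1 - q - y ^ 2)
        + 4 * y ^ 2 * (1 - 2 * q - y ^ 2) * (1 - q - y ^ 2)
        + y ^ 2 * (1 - 2 * q - y ^ 2) * (1 - y ^ 2)) /
        ((1 - q - y ^ 2) * √(1 - q - y ^ 2) * (1 - y ^ 2) ^ 3)| ≤ 8 / (r ^ 3 * ε ^ 3) := by
  have hr2 : 0 < r ^ 2 := by positivity
  have hw0 : 0 < 1 - q - y ^ 2 := by linarith
  have hy := sq_nonneg y
  have hs : r ≤ √(1 - q - y ^ 2) := Real.le_sqrt_of_sq_le hw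
  rw [abs_div]
  apply div_le_div₀ (by norm_num) _ (by positivity)
  · have : ((1 - q - y ^ 2) * √(1 - q - y ^ 2) * (1 - y ^ 2) ^ 3) ≥ (r ^ 2 * r) * ε ^ 3 := by
      have : ε ≤ 1 - y ^ 2 := by linarith
      gcongr
    calc _ = r ^ 2 * r * ε ^ 3 := by ring
      _ ≤ _ := this
      _ ≤ _ := le_abs_self _
  · have A : |1 - 2 * q - 3 * y ^ 2| ≤ 3 := by rw [abs_le]; constructor <;> linarith
    have B : |1 - 2 * q - y ^ 2| ≤ 1 := by rw [abs_le]; constructor <;> linarith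
    have C : |1 - y ^ 2| ≤ 1 := by rw [abs_le]; constructor <;> linarith
    have D : |1 - q - y ^ 2| ≤ 1 := by rw [abs_le]; constructor <;> linarith
    have E : |y ^ 2| ≤ 1 := by rw [abs_le]; constructor <;> linarith
    refine (abs_add_three _ _ _).trans ?_
    simp only [abs_mul]
    have t1 : |1 - 2 * q - 3 * y ^ 2| * |1 - y ^ 2| * |1 - q - y ^ 2| ≤ 3 * 1 * 1 := by gcongr
    have t2 : |(4:ℝ)| * |y ^ 2| * |1 - 2 * q - y ^ 2| * |1 - q - y ^ 2| ≤ 4 * 1 * 1 * 1 := by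
      rw [abs_of_pos (by norm_num : (0:ℝ) < 4)]; gcongr
    have t3 : |y ^ 2| * |1 - 2 * q - y ^ 2| * |1 - y ^ 2| ≤ 1 * 1 * 1 := by gcongr
    linarith

/-- Uniform second-order Taylor expansion of `ω_{d,α}` at the largest
Jacobi root `s' = t_{1,d}^{α,α}`, with cubic error `C·n²·|x - s'|³`. -/
theorem omega_taylor_expansion_at_max_root
    (K : ℝ) (hK : 1 ≤ K) (ε : ℝ) (hε : ε ∈ Set.Ioo (0 : ℝ) 1) :
    ∃ C : ℝ, 0 < C ∧
      ∀ (n d : ℕ) (α : ℝ), 0 < n → 2 ≤ d → Even d → Real.sqrt (7 / 6) ≤ α →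
        (d : ℝ) ≤ K * n → α ≤ K * n → qda d α ∈ Set.Ico ε 1 →
        (n : ℝ) ^ (-(2 : ℝ) / 3) ≤ 1 - qda d α - maxRoot α α d ^ 2 →
        ∀ x ∈ Set.Icc (0 : ℝ) (Real.sqrt (1 - qda d α)),
          (n : ℝ) ^ (-(2 : ℝ) / 3) ≤ 1 - qda d α - x ^ 2 →
          |omegada d α x - omegada d α (maxRoot α α d) -
              Real.sqrt (((d : ℝ) + α) * ((d : ℝ) + α + 1)) *
                  Real.sqrt (1 - qda d α - maxRoot α α d ^ 2) / (1 - maxRoot α α d ^ 2) *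
                (x - maxRoot α α d) -
              maxRoot α α d * Real.sqrt (((d : ℝ) + α) * ((d : ℝ) + α + 1)) *
                  (1 - 2 * qda d α - maxRoot α α d ^ 2) /
                  (2 * Real.sqrt (1 - qda d α - maxRoot α α d ^ 2) *
                    (1 - maxRoot α α d ^ 2) ^ 2) *
                (x - maxRoot α α d) ^ 2| ≤
            C * (n : ℝ) ^ 2 * |x - maxRoot α α d| ^ 3 := by
  have hε0 : 0 < ε := hε.1
  have hK0 : 0 < K := by linarith
  refine ⟨24 * K / ε ^ 3, by positivity, ?_⟩
  intro n d α hn hd2 hd hα hdn hαn hq hs x hx hxw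
  have hs0 := maxRoot_nonneg α d hd
  have hom : ∀ y, omegada d α y = √(((d : ℝ) + α) * ((d : ℝ) + α + 1)) *
    (Real.arccos (Real.sqrt ((1 - qda d α - y ^ 2) / (1 - qda d α))) -
      Real.sqrt (qda d α) *
        Real.arccos (Real.sqrt ((1 - qda d α - y ^ 2) / ((1 - qda d α) * (1 - y ^ 2))))) :=
    fun y => rfl
  generalize omegada d α = om at *
  generalize maxRoot α α d = s at *
  generalize qda d α = q at *
  have hn1 : (1 : ℝ) ≤ n := by exact_mod_cast hn
  have hα0 : 0 ≤ α := (Real.sqrt_nonneg _).trans hα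
  have hd0 : (0 : ℝ) ≤ d := Nat.cast_nonneg d
  have hN : √(((d : ℝ) + α) * ((d : ℝ) + α + 1)) ≤ 3 * K * n := by
    apply Real.sqrt_le_iff.2
    have hKn : 1 ≤ K * n := by nlinarith
    refine ⟨by positivity, ?_⟩
    calc ((d : ℝ) + α) * ((d : ℝ) + α + 1) ≤ (2 * (K * n)) * (3 * (K * n)) := by
          gcongr <;> linarith
      _ ≤ _ := by nlinarith
  have hN0 := Real.sqrt_nonneg (((d : ℝ) + α) * ((d : ℝ) + α + 1))
  generalize √(((d : ℝ) + α) * ((d : ℝ) + α + 1)) = N at *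
  obtain ⟨r, hr⟩ : ∃ r : ℝ, r = (n : ℝ) ^ (-(1 : ℝ) / 3) := ⟨_, rfl⟩
  have hnp : (0 : ℝ) < n := by linarith
  have hr0 : 0 < r := hr ▸ Real.rpow_pos_of_pos hnp _
  have hr2 : (n : ℝ) ^ (-(2 : ℝ) / 3) = r ^ 2 := by
    rw [hr, ← Real.rpow_natCast, ← Real.rpow_mul hnp.le]; norm_num
  have hr3 : r ^ 3 = (n : ℝ)⁻¹ := by
    rw [hr, ← Real.rpow_natCast, ← Real.rpow_mul hnp.le, ← Real.rpow_neg_one]; norm_num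
  rw [hr2] at hs hxw
  have hq0 : 0 < q := lt_of_lt_of_le hε0 hq.1
  have hx0 : 0 ≤ x := hx.1
  have hU : ∀ y ∈ Set.uIcc s x, 0 ≤ y ∧ r ^ 2 ≤ 1 - q - y ^ 2 := by
    intro y hy
    rcases Set.mem_uIcc.1 hy with h | h
    · exact ⟨by linarith, by nlinarith⟩
    · exact ⟨by linarith, by nlinarith⟩
  have hr2p : 0 < r ^ 2 := by positivity
  have hW : ∀ y ∈ Set.uIcc s x, 0 < 1 - q - y ^ 2 := fun y hy => hr2p.trans_le (hU y hy).2
  have T := taylor_aux (fun y => smoothPhase q y) (fun y => √(1 - q - y ^ 2) / (1 - y ^ 2))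
    (fun y => y * (1 - 2 * q - y ^ 2) / (√(1 - q - y ^ 2) * (1 - y ^ 2) ^ 2)) _ s x
    (8 / (r ^ 3 * ε ^ 3))
    (fun y hy => phase_deriv q y hq0 hq.2 (hW y hy))
    (fun y hy => phase_deriv2 q y hq0 (hW y hy))
    (fun y hy => phase_deriv3 q y hq0 (hW y hy))
    (fun y hy => phase_bound q y ε r hε0 hq.1 hq.2 hr0 (hU y hy).2)
  rw [hom, hom, phase_eq q x hq0 hq.2 hx0 (by linarith), phase_eq q s hq0 hq.2 hs0 (by linarith)]
  have hws : 0 < √(1 - q - s ^ 2) := Real.sqrt_pos.2 (by linarith)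
  have h1s : 0 < 1 - s ^ 2 := by linarith
  have key : N * smoothPhase q x - N * smoothPhase q s -
      N * √(1 - q - s ^ 2) / (1 - s ^ 2) * (x - s) -
      s * N * (1 - 2 * q - s ^ 2) / (2 * √(1 - q - s ^ 2) * (1 - s ^ 2) ^ 2) * (x - s) ^ 2
      = N * (smoothPhase q x - smoothPhase q s - √(1 - q - s ^ 2) / (1 - s ^ 2) * (x - s) -
        s * (1 - 2 * q - s ^ 2) / (√(1 - q - s ^ 2) * (1 - s ^ 2) ^ 2) / 2 * (x - s) ^ 2) := by
    field_simp
  rw [key, abs_mul, abs_of_nonneg hN0]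
  calc _ ≤ (3 * K * n) * (8 / (r ^ 3 * ε ^ 3) * |x - s| ^ 3) := by
        gcongr
    _ = _ := by
        rw [hr3]; field_simp; ring
end
end

section
/- Let ρ > 0 and let (d_n) be a sequence of even integers with d_n ≥ 2 and (α_n) a sequence of reals with α_n ≥ sqrt(7/6), such that d_n/n → c₁ > 0, α_n/n → c₂ > 0 and α_n/d_n → 1/(2ρ) as n → ∞; set s'_n := t_{1,d_n}^{α_n,α_n}. Then for any sequence (x_n) with x_n ∈ [0, sqrt(1−q_{d_n,α_n})], x_n ≠ s'_n and n^{2/3}·|x_n − s'_n| → 0, one has (R_{d_n,α_n}(x_n) − R_{d_n,α_n}(s'_n)) / ((x_n − s'_n)·b_{d_n,α_n}(s'_n)) − T_{d_n,α_n}(s'_n) → 0 as n → ∞. -/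
open MeasureTheory Filter Real

noncomputable section

/-- `b_{d,α}(x) = sqrt(1 - q_{d,α} - x²)·sqrt((d+α)(d+α+1))/(1-x²)`. -/
def bda (d : ℕ) (α : ℝ) (x : ℝ) : ℝ :=
  Real.sqrt (1 - qda d α - x ^ 2) * Real.sqrt (((d : ℝ) + α) * ((d : ℝ) + α + 1)) / (1 - x ^ 2)

/-- `f_{d,α}(x) = ((1 - q_{d,α} - x²)(d+α)(d+α+1))^{1/4}·(1-x²)^{α/2}·p_d^{α,α}(x)`. -/
def fda (d : ℕ) (α : ℝ) (x : ℝ) : ℝ :=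
  ((1 - qda d α - x ^ 2) * (((d : ℝ) + α) * ((d : ℝ) + α + 1))) ^ ((1 : ℝ) / 4) *
    (1 - x ^ 2) ^ (α / 2) * jacobiP α α d x

/-- `ε_{d,α}(x)`. -/
def epsda (d : ℕ) (α : ℝ) (x : ℝ) : ℝ :=
  -(x ^ 6 + 6 * qda d α * x ^ 4 - 3 * x ^ 2 + 4 * qda d α ^ 2 - 6 * qda d α + 2) /
    (4 * (((d : ℝ) + α) * ((d : ℝ) + α + 1)) * (1 - qda d α - x ^ 2) ^ 3)

/-- The remainder `R_{d,α}(x)`. -/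
def Rda (d : ℕ) (α : ℝ) (x : ℝ) : ℝ :=
  (1 / fda d α 0) *
    ∫ t in (0 : ℝ)..x,
      epsda d α t * bda d α t * fda d α t * Real.sin (omegada d α x - omegada d α t)

/-- The auxiliary term `T_{d,α}(x)`. -/
def Tda (d : ℕ) (α : ℝ) (x : ℝ) : ℝ :=
  (1 / fda d α 0) *
    ∫ t in (0 : ℝ)..x,
      epsda d α t * bda d α t * fda d α t * Real.cos (omegada d α x - omegada d α t)


namespace JacAux

/-- coefficients -/
def cf (α : ℝ) (d s : ℕ) : ℝ := genBinom ((d : ℝ) + α) (d - s) * genBinom ((d : ℝ) + α) s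

/-- monomials -/
def mo (x : ℝ) (s r : ℕ) : ℝ := ((x - 1) / 2) ^ s * ((x + 1) / 2) ^ r

/-- first derivative of monomials -/
def mo1 (x : ℝ) (s r : ℕ) : ℝ :=
  1 / 2 * ((s : ℝ) * mo x (s - 1) r + (r : ℝ) * mo x s (r - 1))

/-- second derivative of monomials -/
def mo2 (x : ℝ) (s r : ℕ) : ℝ :=
  1 / 2 * ((s : ℝ) * mo1 x (s - 1) r + (r : ℝ) * mo1 x s (r - 1))

lemma jacobiP_eq (α : ℝ) (d : ℕ) (x : ℝ) :
    jacobiP α α d x = ∑ s ∈ Finset.range (d + 1), cf α d s * mo x s (d - s) := by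
  unfold jacobiP cf mo
  exact Finset.sum_congr rfl fun s _ => by ring

/-- first derivative -/
def jp1 (α : ℝ) (d : ℕ) (x : ℝ) : ℝ := ∑ s ∈ Finset.range (d + 1), cf α d s * mo1 x s (d - s)

/-- second derivative -/
def jp2 (α : ℝ) (d : ℕ) (x : ℝ) : ℝ := ∑ s ∈ Finset.range (d + 1), cf α d s * mo2 x s (d - s)

lemma mo_deriv (x : ℝ) (s r : ℕ) : HasDerivAt (fun y => mo y s r) (mo1 x s r) x := by
  unfold mo1 mo
  have h1 : HasDerivAt (fun y : ℝ => (y - 1) / 2) (1 / 2) x :=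
    ((hasDerivAt_id x).sub_const 1).div_const 2
  have h2 : HasDerivAt (fun y : ℝ => (y + 1) / 2) (1 / 2) x :=
    ((hasDerivAt_id x).add_const 1).div_const 2
  have := (h1.fun_pow s).fun_mul (h2.fun_pow r)
  refine this.congr_deriv ?_
  ring

lemma mo1_deriv (x : ℝ) (s r : ℕ) : HasDerivAt (fun y => mo1 y s r) (mo2 x s r) x := by
  unfold mo2
  have := (((mo_deriv x (s - 1) r).const_mul (s : ℝ)).fun_add
    ((mo_deriv x s (r - 1)).const_mul (r : ℝ))).const_mul (1 / 2)
  exact this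

lemma jp_deriv (α : ℝ) (d : ℕ) (x : ℝ) : HasDerivAt (jacobiP α α d) (jp1 α d x) x := by
  have : jacobiP α α d = fun x => ∑ s ∈ Finset.range (d + 1), cf α d s * mo x s (d - s) := by
    funext x; exact jacobiP_eq α d x
  rw [this]
  exact HasDerivAt.fun_sum fun s _ => (mo_deriv x s (d - s)).const_mul _

lemma jp1_deriv (α : ℝ) (d : ℕ) (x : ℝ) : HasDerivAt (jp1 α d) (jp2 α d x) x := by
  exact HasDerivAt.fun_sum fun s _ => (mo1_deriv x s (d - s)).const_mul _

lemma genBinom_succ (a : ℝ) (k : ℕ) : genBinom a (k + 1) * (k + 1) = genBinom a k * (a - k) := by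
  unfold genBinom
  rw [Finset.prod_range_succ, Nat.factorial_succ]
  have : (Nat.factorial k : ℝ) ≠ 0 := by positivity
  have h2 : (k : ℝ) + 1 ≠ 0 := by positivity
  push_cast
  field_simp

lemma cf_rec (α : ℝ) (s r : ℕ) :
    cf α (s + r + 1) (s + 1) * ((s + 1) * (α + s + 1)) =
      cf α (s + r + 1) s * ((r + 1) * (r + 1 + α)) := by
  unfold cf
  have e1 : s + r + 1 - (s + 1) = r := by omega
  have e2 : s + r + 1 - s = r + 1 := by omega
  rw [e1, e2]
  have h1 := genBinom_succ (((s + r + 1 : ℕ) : ℝ) + α) s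
  have h2 := genBinom_succ (((s + r + 1 : ℕ) : ℝ) + α) r
  have c1 : ((s + r + 1 : ℕ) : ℝ) + α - s = r + 1 + α := by push_cast; ring
  have c2 : ((s + r + 1 : ℕ) : ℝ) + α - r = α + s + 1 := by push_cast; ring
  rw [c1] at h1
  rw [c2] at h2
  generalize genBinom (((s + r + 1 : ℕ) : ℝ) + α) s = A at *
  generalize genBinom (((s + r + 1 : ℕ) : ℝ) + α) (s + 1) = A' at *
  generalize genBinom (((s + r + 1 : ℕ) : ℝ) + α) r = B at *
  generalize genBinom (((s + r + 1 : ℕ) : ℝ) + α) (r + 1) = B' at *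
  linear_combination B * (α + s + 1) * h1 - A * (r + 1 + α) * h2

/-- operator applied to a monomial -/
lemma op_mo (α x : ℝ) (s r : ℕ) :
    (1 - x ^ 2) * mo2 x s r - (2 * α + 2) * x * mo1 x s r
        + ((s : ℝ) + r) * ((s : ℝ) + r + 2 * α + 1) * mo x s r =
      s * (s + α) * (mo x s r - mo x (s - 1) (r + 1))
        - r * (r + α) * (mo x (s + 1) (r - 1) - mo x s r) := by
  unfold mo2 mo1 mo
  rcases s with _ | _ | s <;> rcases r with _ | _ | r <;> simp <;> ring

/-- telescoping quantity -/
def HH (α x : ℝ) (d : ℕ) : ℕ → ℝ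
  | 0 => 0
  | s + 1 => cf α d s * (((d - s : ℕ) : ℝ) * (((d - s : ℕ) : ℝ) + α)) *
      (mo x (s + 1) (d - s - 1) - mo x s (d - s))

lemma jp_ode (α : ℝ) (d : ℕ) (x : ℝ) :
    (1 - x ^ 2) * jp2 α d x - (2 * α + 2) * x * jp1 α d x
        + (d : ℝ) * ((d : ℝ) + 2 * α + 1) * jacobiP α α d x = 0 := by
  rw [jacobiP_eq, jp1, jp2, Finset.mul_sum, Finset.mul_sum, Finset.mul_sum,
    ← Finset.sum_sub_distrib, ← Finset.sum_add_distrib]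
  have key : ∀ s ∈ Finset.range (d + 1),
      (1 - x ^ 2) * (cf α d s * mo2 x s (d - s)) - (2 * α + 2) * x * (cf α d s * mo1 x s (d - s))
        + (d : ℝ) * ((d : ℝ) + 2 * α + 1) * (cf α d s * mo x s (d - s))
        = HH α x d s - HH α x d (s + 1) := by
    intro s hs
    have hsd : s ≤ d := by simpa [Nat.lt_succ_iff] using hs
    obtain ⟨r, rfl⟩ := Nat.exists_eq_add_of_le hsd
    have hop := op_mo α x s r
    have e : s + r - s = r := by omega
    have hH : HH α x (s + r) s = cf α (s + r) s * (s * (s + α)) *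
        (mo x s r - mo x (s - 1) (r + 1)) := by
      rcases s with _ | s
      · simp [HH]
      · have e2 : s + 1 + r - s = r + 1 := by omega
        have hc := cf_rec α s r
        have e3 : s + r + 1 = s + 1 + r := by ring
        rw [e3] at hc
        simp only [HH, e2, Nat.add_sub_cancel]
        push_cast
        linear_combination (mo x s (r + 1) - mo x (s + 1) r) * hc
    rw [hH]
    simp only [HH, e]
    push_cast
    linear_combination cf α (s + r) s * hop
  rw [Finset.sum_congr rfl key, Finset.sum_range_sub']
  simp [HH]

lemma genBinom_pos {a : ℝ} {k : ℕ} (h : (k : ℝ) < a + 1) : 0 < genBinom a k := by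
  unfold genBinom
  apply div_pos _ (by positivity)
  apply Finset.prod_pos
  intro i hi
  have : ((i + 1 : ℕ) : ℝ) ≤ k := by exact_mod_cast (Finset.mem_range.1 hi)
  push_cast at this
  linarith

lemma cf_pos {α : ℝ} (hα : 0 < α) {d s : ℕ} (h : s ≤ d) : 0 < cf α d s := by
  unfold cf
  have h1 : ((d - s : ℕ) : ℝ) ≤ d := by exact_mod_cast Nat.sub_le d s
  have h2 : (s : ℝ) ≤ d := by exact_mod_cast h
  exact mul_pos (genBinom_pos (by linarith)) (genBinom_pos (by linarith))

lemma jp_pos {α : ℝ} (hα : 0 < α) (d : ℕ) {x : ℝ} (hx : 1 ≤ x) : 0 < jacobiP α α d x := by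
  rw [jacobiP_eq]
  apply Finset.sum_pos'
  · intro s hs
    have hsd : s ≤ d := by simpa [Nat.lt_succ_iff] using hs
    have := cf_pos hα hsd
    have h1 : 0 ≤ (x - 1) / 2 := by linarith
    have h2 : 0 ≤ (x + 1) / 2 := by linarith
    unfold mo
    positivity
  · refine ⟨0, by simp, ?_⟩
    have := cf_pos hα (Nat.zero_le d)
    have h2 : 0 < (x + 1) / 2 := by linarith
    unfold mo
    simp only [pow_zero]
    positivity

lemma jp_even (α : ℝ) {d : ℕ} (hd : Even d) (x : ℝ) :
    jacobiP α α d (-x) = jacobiP α α d x := by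
  rw [jacobiP_eq, jacobiP_eq, ← Finset.sum_range_reflect]
  apply Finset.sum_congr rfl
  intro s hs
  have hsd : s ≤ d := by simpa [Nat.lt_succ_iff] using hs
  obtain ⟨r, rfl⟩ := Nat.exists_eq_add_of_le hsd
  have e : s + r - s = r := by omega
  have e1 : s + r + 1 - 1 - s = r := by omega
  have e2 : s + r - r = s := by omega
  simp only [e1, e, e2, cf, mo]
  have h1 : (-x - 1) / 2 = -((x + 1) / 2) := by ring
  have h2 : (-x + 1) / 2 = -((x - 1) / 2) := by ring
  rw [h1, h2, neg_pow, neg_pow ((x - 1) / 2)]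
  have h3 : (-1 : ℝ) ^ r * (-1) ^ s = 1 := by
    rw [← pow_add, add_comm]; exact hd.neg_one_pow
  linear_combination genBinom (((s + r : ℕ) : ℝ) + α) s * genBinom (((s + r : ℕ) : ℝ) + α) r *
    ((x + 1) / 2) ^ r * ((x - 1) / 2) ^ s * h3

lemma jp1_zero (α : ℝ) {d : ℕ} (hd : Even d) : jp1 α d 0 = 0 := by
  have h1 := jp_deriv α d 0
  have h2 : HasDerivAt (fun x => jacobiP α α d (-x)) (-(jp1 α d 0)) 0 := by
    have h3 : HasDerivAt (jacobiP α α d) (jp1 α d 0) (-0) := by simpa using h1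
    have := h3.comp (0 : ℝ) (hasDerivAt_neg (0 : ℝ))
    simpa [Function.comp_def] using this
  have e : (fun x => jacobiP α α d (-x)) = jacobiP α α d := by
    funext x; exact jp_even α hd x
  rw [e] at h2
  have := h1.unique h2
  linarith

end JacAux

namespace JacAux

/-- `N = (d+α)(d+α+1)` -/
def NN (d : ℕ) (α : ℝ) : ℝ := ((d : ℝ) + α) * ((d : ℝ) + α + 1)

lemma NN_ge {d : ℕ} {α : ℝ} (hα : 1 < α) : α ^ 2 < NN d α := by
  have : (0 : ℝ) ≤ d := by positivity
  unfold NN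
  nlinarith

lemma NN_pos {d : ℕ} {α : ℝ} (hα : 1 < α) : 0 < NN d α := lt_trans (by positivity) (NN_ge hα)

lemma q_mul {d : ℕ} {α : ℝ} (hα : 1 < α) : qda d α * NN d α = α ^ 2 - 1 := by
  have := NN_pos (d := d) hα
  unfold qda
  change (α ^ 2 - 1) / NN d α * NN d α = _
  field_simp

lemma q_pos {d : ℕ} {α : ℝ} (hα : 1 < α) : 0 < qda d α := by
  have h1 := NN_pos (d := d) hα
  have h2 := q_mul (d := d) hα
  by_contra h
  push Not at h
  nlinarith

lemma q_lt {d : ℕ} {α : ℝ} (hα : 1 < α) : qda d α < 1 := by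
  have h0 := NN_ge (d := d) hα
  have h1 := NN_pos (d := d) hα
  have h2 := q_mul (d := d) hα
  by_contra h
  push Not at h
  nlinarith

/-- Sturm-form solution -/
def uu (d : ℕ) (α x : ℝ) : ℝ := (1 - x ^ 2) ^ ((α + 1) / 2) * jacobiP α α d x

/-- its derivative -/
def uu1 (d : ℕ) (α x : ℝ) : ℝ :=
  (1 - x ^ 2) ^ ((α + 1) / 2) * (jp1 α d x - (α + 1) * x / (1 - x ^ 2) * jacobiP α α d x)

/-- potential -/
def QQ (d : ℕ) (α x : ℝ) : ℝ := NN d α * (1 - qda d α - x ^ 2) / (1 - x ^ 2) ^ 2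

lemma pw_deriv (γ : ℝ) {x : ℝ} (hx : 0 < 1 - x ^ 2) :
    HasDerivAt (fun y : ℝ => (1 - y ^ 2) ^ γ) ((1 - x ^ 2) ^ γ * (-(2 * γ * x) / (1 - x ^ 2))) x := by
  have h1 : HasDerivAt (fun y : ℝ => 1 - y ^ 2) (-(2 * x)) x := by
    simpa using ((hasDerivAt_id x).fun_pow 2).const_sub 1
  refine (h1.rpow_const (p := γ) (Or.inl hx.ne')).congr_deriv ?_
  rw [Real.rpow_sub_one hx.ne']
  field_simp

lemma uu_deriv (d : ℕ) (α : ℝ) {x : ℝ} (hx : 0 < 1 - x ^ 2) :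
    HasDerivAt (uu d α) (uu1 d α x) x := by
  refine ((pw_deriv ((α + 1) / 2) hx).fun_mul (jp_deriv α d x)).congr_deriv ?_
  unfold uu1
  field_simp
  ring

lemma uu1_deriv (d : ℕ) {α : ℝ} (hα : 1 < α) {x : ℝ} (hx : 0 < 1 - x ^ 2) :
    HasDerivAt (uu1 d α) (-(QQ d α x * uu d α x)) x := by
  have h1 : HasDerivAt (fun y : ℝ => 1 - y ^ 2) (-(2 * x)) x := by
    simpa using ((hasDerivAt_id x).fun_pow 2).const_sub 1
  have h2 : HasDerivAt (fun y : ℝ => (α + 1) * y) (α + 1) x := by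
    simpa using (hasDerivAt_id x).const_mul (α + 1)
  have h3 := (jp1_deriv α d x).fun_sub ((h2.fun_div h1 hx.ne').fun_mul (jp_deriv α d x))
  refine ((pw_deriv ((α + 1) / 2) hx).fun_mul h3).congr_deriv ?_
  have ode := jp_ode α d x
  have hq := q_mul (d := d) hα
  have e2 : jp2 α d x = ((2 * α + 2) * x * jp1 α d x
        - (d : ℝ) * ((d : ℝ) + 2 * α + 1) * jacobiP α α d x) / (1 - x ^ 2) := by
    field_simp
    linarith
  have hQ : QQ d α x = (NN d α * (1 - x ^ 2) - (α ^ 2 - 1)) / (1 - x ^ 2) ^ 2 := by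
    unfold QQ
    rw [← hq]
    ring
  rw [hQ, e2]
  unfold uu NN
  field_simp
  ring

lemma uu_cont (d : ℕ) {α : ℝ} (hα : 1 < α) : Continuous (uu d α) := by
  unfold uu
  refine Continuous.mul ?_ ?_
  · exact Continuous.rpow_const (by fun_prop) fun x => Or.inr (by linarith)
  · exact continuous_iff_continuousAt.2 fun x => (jp_deriv α d x).continuousAt

/-- Location of the zeros. -/
lemma zero_loc {d : ℕ} {α : ℝ} (hα : 1 < α) {z : ℝ} (hz0 : 0 ≤ z) (hz : jacobiP α α d z = 0) :
    z < √(1 - qda d α) ∧ qda d α ^ 2 ≤ 2 * NN d α * (√(1 - qda d α) - z) ^ 3 := by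
  have hz1 : z < 1 := by
    by_contra h
    push Not at h
    have := jp_pos (by linarith : 0 < α) d h
    linarith
  have hq0 := q_pos (d := d) hα
  have hq1 := q_lt (d := d) hα
  have hN := NN_pos (d := d) hα
  set q := qda d α with hq
  set a := √(1 - q) with ha
  have haa : a ^ 2 = 1 - q := Real.sq_sqrt (by linarith)
  have ha0 : 0 < a := Real.sqrt_pos.2 (by linarith)
  have ha1 : a < 1 := by nlinarith
  have hcont := uu_cont d hα
  have huz : uu d α z = 0 := by simp [uu, hz]
  have hu1 : uu d α 1 = 0 := by
    unfold uu
    rw [one_pow, sub_self, Real.zero_rpow (by linarith), zero_mul]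
  have hpos : ∀ x : ℝ, 0 ≤ x → x < 1 → 0 < 1 - x ^ 2 := fun x h0 h1 => by nlinarith
  -- maximizer of u²
  obtain ⟨m, hm, hmax⟩ := isCompact_Icc.exists_isMaxOn (Set.nonempty_Icc.2 hz1.le)
    ((hcont.pow 2).continuousOn (s := Set.Icc z 1))
  have hmax' : ∀ y ∈ Set.Icc z 1, uu d α y ^ 2 ≤ uu d α m ^ 2 := fun y hy => hmax hy
  -- nonzero
  have hne : uu d α m ≠ 0 := by
    intro h0
    have hall : ∀ y ∈ Set.Ioo z 1, jacobiP α α d y = 0 := by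
      intro y hy
      have h1 := hmax' y ⟨hy.1.le, hy.2.le⟩
      rw [h0] at h1
      have h2 : uu d α y = 0 := by
        have : uu d α y ^ 2 = 0 := le_antisymm (by simpa using h1) (sq_nonneg _)
        simpa using this
      unfold uu at h2
      have h3 := Real.rpow_pos_of_pos (hpos y (by linarith [hy.1]) hy.2) ((α + 1) / 2)
      rcases mul_eq_zero.1 h2 with h | h
      · linarith
      · exact h
    have hcl : jacobiP α α d 1 = 0 := by
      have hc : ContinuousWithinAt (jacobiP α α d) (Set.Ioo z 1) 1 :=
        (jp_deriv α d 1).continuousAt.continuousWithinAt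
      have h2 : Tendsto (jacobiP α α d) (nhdsWithin 1 (Set.Ioo z 1)) (nhds 0) := by
        refine (tendsto_congr' ?_).2 tendsto_const_nhds
        filter_upwards [self_mem_nhdsWithin] with y hy using hall y hy
      have : (nhdsWithin (1 : ℝ) (Set.Ioo z 1)).NeBot := by
        rw [← mem_closure_iff_nhdsWithin_neBot, closure_Ioo hz1.ne]
        exact ⟨hz1.le, le_rfl⟩
      exact tendsto_nhds_unique hc h2
    have := jp_pos (by linarith : 0 < α) d (le_refl (1 : ℝ))
    linarith
  have hmz : z < m := lt_of_le_of_ne hm.1 (by rintro rfl; exact hne huz)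
  have hm1 : m < 1 := lt_of_le_of_ne hm.2 (by rintro rfl; exact hne hu1)
  have hder : uu1 d α m = 0 := by
    have hl : IsLocalMax (fun y => uu d α y ^ 2) m := hmax.isLocalMax (Icc_mem_nhds hmz hm1)
    have h2 := hl.hasDerivAt_eq_zero
      ((uu_deriv d α (hpos m (by linarith) hm1)).fun_pow 2)
    have : uu d α m * uu1 d α m = 0 := by
      simp at h2
      rcases h2 with h | h <;> simp [h]
    exact (mul_eq_zero.1 this).resolve_left hne
  -- m ≤ a
  have hma : m ≤ a := by
    by_contra hcon
    push Not at hcon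
    have hg : ∀ x, m ≤ x → x < 1 → HasDerivAt (fun y => uu d α y * uu1 d α y)
        (uu1 d α x * uu1 d α x + uu d α x * -(QQ d α x * uu d α x)) x := fun x h1 h2 =>
      (uu_deriv d α (hpos x (by linarith) h2)).fun_mul (uu1_deriv d hα (hpos x (by linarith) h2))
    have hmono : MonotoneOn (fun y => uu d α y * uu1 d α y) (Set.Ico m 1) := by
      apply monotoneOn_of_deriv_nonneg (convex_Ico m 1)
      · exact fun x hx => (hg x hx.1 hx.2).continuousAt.continuousWithinAt
      · rw [interior_Ico]
        exact fun x hx => (hg x hx.1.le hx.2).differentiableAt.differentiableWithinAt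
      · rw [interior_Ico]
        intro x hx
        rw [(hg x hx.1.le hx.2).deriv]
        have : QQ d α x ≤ 0 := by
          unfold QQ
          apply div_nonpos_of_nonpos_of_nonneg _ (sq_nonneg _)
          apply mul_nonpos_of_nonneg_of_nonpos hN.le
          rw [← hq, ← haa]
          nlinarith [hx.1]
        nlinarith [mul_self_nonneg (uu1 d α x), mul_self_nonneg (uu d α x)]
    have hmono2 : MonotoneOn (fun y => uu d α y ^ 2) (Set.Icc m 1) := by
      apply monotoneOn_of_deriv_nonneg (convex_Icc m 1)
      · exact (hcont.pow 2).continuousOn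
      · rw [interior_Icc]
        exact fun x hx => ((uu_deriv d α (hpos x (by linarith [hx.1]) hx.2)).fun_pow
          2).differentiableAt.differentiableWithinAt
      · rw [interior_Icc]
        intro x hx
        rw [((uu_deriv d α (hpos x (by linarith [hx.1]) hx.2)).fun_pow 2).deriv]
        have := hmono ⟨le_rfl, hm1⟩ ⟨hx.1.le, hx.2⟩ hx.1.le
        simp only [hder, mul_zero] at this
        simp
        nlinarith
    have := hmono2 ⟨le_rfl, hm1.le⟩ ⟨hm1.le, le_rfl⟩ hm1.le
    simp only [hu1] at this
    have h3 : 0 < uu d α m ^ 2 := by positivity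
    linarith
  have hza : z < a := lt_of_lt_of_le hmz hma
  refine ⟨hza, ?_⟩
  -- mean value
  obtain ⟨ξ, hξ, hξe⟩ := exists_hasDerivAt_eq_slope (uu d α) (uu1 d α) hmz
    hcont.continuousOn fun x hx => uu_deriv d α (hpos x (by linarith [hx.1]) (by linarith [hx.2]))
  obtain ⟨η, hη, hηe⟩ := exists_hasDerivAt_eq_slope (uu1 d α) (fun x => -(QQ d α x * uu d α x)) hξ.2
    (fun x hx => (uu1_deriv d hα (hpos x (by linarith [hx.1, hξ.1])
      (by linarith [hx.2]))).continuousAt.continuousWithinAt)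
    fun x hx => uu1_deriv d hα (hpos x (by linarith [hx.1, hξ.1]) (by linarith [hx.2]))
  rw [huz, sub_zero, eq_div_iff (by linarith)] at hξe
  rw [hder, zero_sub, eq_div_iff (by linarith [hξ.2])] at hηe
  have hum : uu d α m = QQ d α η * uu d α η * (m - ξ) * (m - z) := by
    rw [← hξe]
    have : uu1 d α ξ = QQ d α η * uu d α η * (m - ξ) := by linarith
    rw [this]
  have hηz : z < η := lt_trans hξ.1 hη.1
  have hηm : η < m := hη.2
  have hQ0 : 0 ≤ QQ d α η := by
    unfold QQ
    apply div_nonneg _ (sq_nonneg _)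
    apply mul_nonneg hN.le
    rw [← hq, ← haa]
    nlinarith
  have hQb : QQ d α η ≤ 2 * NN d α * (a - z) / q ^ 2 := by
    unfold QQ
    rw [← hq, ← haa]
    have h1 : a ^ 2 - η ^ 2 ≤ 2 * (a - z) := by nlinarith
    have h2 : q ≤ 1 - η ^ 2 := by nlinarith
    apply div_le_div₀
    · have : 0 < a - z := by linarith
      positivity
    · nlinarith
    · positivity
    · exact pow_le_pow_left₀ hq0.le h2 2
  have habs : |uu d α η| ≤ |uu d α m| :=
    sq_le_sq.1 (hmax' η ⟨hηz.le, by linarith⟩)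
  have hum' : |uu d α m| = QQ d α η * |uu d α η| * (m - ξ) * (m - z) := by
    conv_lhs => rw [hum]
    rw [abs_mul, abs_mul, abs_mul, abs_of_nonneg hQ0, abs_of_pos (by linarith [hξ.2] : 0 < m - ξ),
      abs_of_pos (by linarith : 0 < m - z)]
  have hAm : 0 < |uu d α m| := abs_pos.2 hne
  have hh : 0 < a - z := by linarith
  have hb : |uu d α m| ≤ (2 * NN d α * (a - z) / q ^ 2) * |uu d α m| * (a - z) * (a - z) := by
    conv_lhs => rw [hum']
    have i1 : 0 ≤ m - ξ := by linarith [hξ.2]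
    have i2 : 0 ≤ m - z := by linarith
    have i3 : m - ξ ≤ a - z := by linarith [hξ.1]
    have i4 : m - z ≤ a - z := by linarith
    gcongr
  have hb2 : 1 ≤ (2 * NN d α * (a - z) / q ^ 2) * (a - z) * (a - z) := by
    by_contra hcon
    push Not at hcon
    nlinarith
  have e : (2 * NN d α * (a - z) / q ^ 2) * (a - z) * (a - z) = 2 * NN d α * (a - z) ^ 3 / q ^ 2 := by
    ring
  rw [e, le_div_iff₀ (by positivity)] at hb2
  linarith

lemma maxRoot_loc {d : ℕ} {α : ℝ} (hα : 1 < α) (hd : Even d) :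
    0 ≤ maxRoot α α d ∧ maxRoot α α d < √(1 - qda d α) ∧
      (maxRoot α α d = 0 ∨
        qda d α ^ 2 ≤ 2 * NN d α * (√(1 - qda d α) - maxRoot α α d) ^ 3) := by
  have hq1 := q_lt (d := d) hα
  have ha0 : 0 < √(1 - qda d α) := Real.sqrt_pos.2 (by linarith)
  unfold maxRoot
  set S := {x : ℝ | jacobiP α α d x = 0} with hS
  rcases Set.eq_empty_or_nonempty S with h | ⟨z, hz⟩
  · rw [h, Real.sSup_empty]
    exact ⟨le_rfl, ha0, Or.inl rfl⟩
  · have hc : IsClosed S := isClosed_eq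
      (continuous_iff_continuousAt.2 fun x => (jp_deriv α d x).continuousAt) continuous_const
    have hb : BddAbove S := ⟨1, fun y hy => by
      by_contra h
      push Not at h
      have := jp_pos (by linarith : 0 < α) d h.le
      have hy' : jacobiP α α d y = 0 := hy
      linarith⟩
    have hmem := hc.csSup_mem ⟨z, hz⟩ hb
    have h0 : 0 ≤ sSup S := by
      rcases le_total 0 z with h | h
      · exact h.trans (le_csSup hb hz)
      · have hz' : jacobiP α α d z = 0 := hz
        have : -z ∈ S := by
          change jacobiP α α d (-z) = 0
          rw [jp_even α hd, hz']
        exact (by linarith : 0 ≤ -z).trans (le_csSup hb this)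
    have := zero_loc hα h0 hmem
    exact ⟨h0, this.1, Or.inr this.2⟩

end JacAux

namespace JacAux

/-- Abstract second-order estimate for the remainder. -/
lemma abstract_est {a ν C κ s x : ℝ} {ω b b' f k e : ℝ → ℝ} (ha : 0 < a) (hν : 0 < ν)
    (hC : 0 < C) (hκ : 0 < κ)
    (hω : ∀ t ∈ Set.Ioo (-a) a, HasDerivAt ω (b t) t)
    (hf : ∀ t ∈ Set.Ioo (-a) a, HasDerivAt f (b t * k t) t)
    (hk : ∀ t ∈ Set.Ioo (-a) a, HasDerivAt k ((-e t - b t) * f t) t)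
    (hb : ∀ t ∈ Set.Ioo (-a) a, HasDerivAt b (b' t) t)
    (he : ContinuousOn e (Set.Ioo (-a) a))
    (hk0 : k 0 = 0) (hf0 : f 0 ≠ 0)
    (heb : ∀ t ∈ Set.Ico 0 a, |e t| ≤ C / (ν * √(a - t) ^ 5))
    (hbb : ∀ t ∈ Set.Ico 0 a, |b t| ≤ C * ν * √(a - t))
    (hbb' : ∀ t ∈ Set.Ico 0 a, |b' t| ≤ C * (ν / √(a - t)))
    (hs : s ∈ Set.Ico 0 a) (hx : 0 ≤ x) (hxs : |x - s| ≤ (a - s) / 2)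
    (hκb : κ ≤ ν * √((a - s) / 2) ^ 3) :
    |(1 / f 0) * (∫ t in (0 : ℝ)..x, e t * f t * Real.sin (ω x - ω t))
        - (1 / f 0) * (∫ t in (0 : ℝ)..s, e t * f t * Real.sin (ω s - ω t))
        - b s * ((1 / f 0) * (∫ t in (0 : ℝ)..s, e t * f t * Real.cos (ω s - ω t))) * (x - s)|
      ≤ Real.exp (C / κ) * (C * (C / κ) + C ^ 2 / κ + C ^ 3) * (ν / √((a - s) / 2)) *
          |x - s| ^ 2 := by
  have hsub : ∀ t ∈ Set.Ico 0 a, t ∈ Set.Ioo (-a) a := fun t ht => ⟨by linarith [ht.1], ht.2⟩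
  have hw : ∀ t, t < a → 0 < √(a - t) := fun t ht => Real.sqrt_pos.2 (by linarith)
  have hwd : ∀ t, t < a → HasDerivAt (fun y => √(a - y)) (-1 / (2 * √(a - t))) t := fun t ht => by
    have h1 : HasDerivAt (fun y : ℝ => a - y) (-1) t := by
      simpa using (hasDerivAt_id t).const_sub a
    exact h1.sqrt (by linarith : a - t ≠ 0)
  set G : ℝ → ℝ := fun t => 2 / 3 * C / (ν * √(a - t) ^ 3) with hGdef
  have hGd : ∀ t, t < a → HasDerivAt G (C / (ν * √(a - t) ^ 5)) t := fun t ht => by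
    have h0 := hw t ht
    have h1 := ((hasDerivAt_const t (2 / 3 * C)).fun_div (((hwd t ht).fun_pow 3).const_mul ν)
      (by positivity))
    refine h1.congr_deriv ?_
    field_simp
    norm_num
    ring
  have hG0 : ∀ t, t < a → 0 ≤ G t := fun t ht => by
    have h0 := hw t ht
    simp only [hGdef]
    positivity
  have hGmono : ∀ t y, t ≤ y → y < a → G t ≤ G y := fun t y hty hy => by
    have h0 := hw y hy
    have : √(a - y) ≤ √(a - t) := Real.sqrt_le_sqrt (by linarith)
    simp only [hGdef]
    gcongr
  -- energy bound
  have hfb : ∀ y ∈ Set.Ico 0 a, |f y| ≤ |f 0| * Real.exp (G y) := by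
    intro y hy
    have hd : ∀ t ∈ Set.Icc 0 y, HasDerivAt (fun t => (f t ^ 2 + k t ^ 2) * Real.exp (-G t))
        ((2 * f t * (b t * k t) + 2 * k t * ((-e t - b t) * f t)) * Real.exp (-G t)
          + (f t ^ 2 + k t ^ 2) * (Real.exp (-G t) * -(C / (ν * √(a - t) ^ 5)))) t := by
      intro t ht
      have ht' : t ∈ Set.Ico 0 a := ⟨ht.1, lt_of_le_of_lt ht.2 hy.2⟩
      have h1 := (((hf t (hsub t ht')).fun_pow 2).fun_add ((hk t (hsub t ht')).fun_pow 2)).fun_mul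
        (hGd t ht'.2).fun_neg.exp
      refine h1.congr_deriv ?_
      norm_num
    have hanti : AntitoneOn (fun t => (f t ^ 2 + k t ^ 2) * Real.exp (-G t)) (Set.Icc 0 y) := by
      apply antitoneOn_of_deriv_nonpos (convex_Icc 0 y)
      · exact fun t ht => (hd t ht).continuousAt.continuousWithinAt
      · rw [interior_Icc]
        exact fun t ht => (hd t ⟨ht.1.le, ht.2.le⟩).differentiableAt.differentiableWithinAt
      · rw [interior_Icc]
        intro t ht
        rw [(hd t ⟨ht.1.le, ht.2.le⟩).deriv]
        have hbd := heb t ⟨ht.1.le, lt_trans ht.2 hy.2⟩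
        have hE := Real.exp_pos (-G t)
        have key : 2 * -e t * f t * k t ≤ C / (ν * √(a - t) ^ 5) * (f t ^ 2 + k t ^ 2) := by
          have h1 : 2 * -e t * f t * k t ≤ |e t| * (f t ^ 2 + k t ^ 2) := by
            rcases abs_cases (e t) with ⟨h, h'⟩ | ⟨h, h'⟩ <;> rw [h]
            · nlinarith [mul_nonneg h' (sq_nonneg (f t + k t))]
            · nlinarith [mul_nonneg (neg_nonneg.2 h'.le) (sq_nonneg (f t - k t))]
          exact h1.trans (mul_le_mul_of_nonneg_right hbd (by positivity))
        have : (2 * f t * (b t * k t) + 2 * k t * ((-e t - b t) * f t)) * Real.exp (-G t)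
          + (f t ^ 2 + k t ^ 2) * (Real.exp (-G t) * -(C / (ν * √(a - t) ^ 5)))
          = (2 * -e t * f t * k t - C / (ν * √(a - t) ^ 5) * (f t ^ 2 + k t ^ 2)) *
              Real.exp (-G t) := by ring
        rw [this]
        exact mul_nonpos_of_nonpos_of_nonneg (by linarith) hE.le
    have h1 := hanti ⟨le_rfl, hy.1⟩ ⟨hy.1, le_rfl⟩ hy.1
    simp only [hk0] at h1
    have h2 : Real.exp (-G 0) ≤ 1 := Real.exp_le_one_iff.2 (by linarith [hG0 0 ha])
    have h3 : f y ^ 2 * Real.exp (-G y) ≤ f 0 ^ 2 := by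
      have i1 : f y ^ 2 * Real.exp (-G y) ≤ (f y ^ 2 + k y ^ 2) * Real.exp (-G y) := by
        gcongr
        nlinarith [sq_nonneg (k y)]
      have i2 : (f 0 ^ 2 + 0 ^ 2) * Real.exp (-G 0) ≤ f 0 ^ 2 := by nlinarith [sq_nonneg (f 0)]
      linarith
    have h4 : f y ^ 2 ≤ f 0 ^ 2 * Real.exp (G y) := by
      rw [Real.exp_neg, ← div_eq_mul_inv, div_le_iff₀ (Real.exp_pos _)] at h3
      exact h3
    have h5 : (1 : ℝ) ≤ Real.exp (G y) := Real.one_le_exp (hG0 y hy.2)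
    refine abs_le_of_sq_le_sq ?_ (by positivity)
    rw [mul_pow, sq_abs]
    nlinarith [mul_nonneg (sq_nonneg (f 0)) (mul_nonneg (by linarith : 0 ≤ Real.exp (G y))
      (by linarith : 0 ≤ Real.exp (G y) - 1))]
  have hUs : ∀ y ∈ Set.Ioo (-a) a, Set.uIcc 0 y ⊆ Set.Ioo (-a) a := fun y hy => by
    intro t ht
    rcases Set.mem_uIcc.1 ht with h | h
    · exact ⟨by linarith [h.1], by linarith [h.2, hy.2]⟩
    · exact ⟨by linarith [h.1, hy.1], by linarith [h.2]⟩
  have hfc : ContinuousOn f (Set.Ioo (-a) a) := fun t ht =>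
    (hf t ht).continuousAt.continuousWithinAt
  have hωc : ContinuousOn ω (Set.Ioo (-a) a) := fun t ht =>
    (hω t ht).continuousAt.continuousWithinAt
  have hcc : ContinuousOn (fun t => e t * f t * Real.cos (ω t)) (Set.Ioo (-a) a) :=
    (he.mul hfc).mul (Real.continuous_cos.comp_continuousOn hωc)
  have hsc : ContinuousOn (fun t => e t * f t * Real.sin (ω t)) (Set.Ioo (-a) a) :=
    (he.mul hfc).mul (Real.continuous_sin.comp_continuousOn hωc)
  -- integral bound
  have hIb : ∀ y ∈ Set.Ico 0 a, ∀ c : ℝ → ℝ, (∀ t, |c t| ≤ 1) →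
      |(1 / f 0) * ∫ t in (0 : ℝ)..y, e t * f t * c t| ≤ G y * Real.exp (G y) := by
    intro y hy c hc
    have hcont : ContinuousOn (fun t => C / (ν * √(a - t) ^ 5)) (Set.uIcc 0 y) := by
      apply ContinuousOn.div continuousOn_const (by fun_prop)
      intro t ht
      rw [Set.uIcc_of_le hy.1] at ht
      have := hw t (lt_of_le_of_lt ht.2 hy.2)
      positivity
    have h1 : ‖∫ t in (0 : ℝ)..y, e t * f t * c t‖ ≤
        ∫ t in (0 : ℝ)..y, C / (ν * √(a - t) ^ 5) * (|f 0| * Real.exp (G y)) := by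
      apply intervalIntegral.norm_integral_le_of_norm_le hy.1
      · refine Filter.Eventually.of_forall fun t ht => ?_
        have ht' : t ∈ Set.Ico 0 a := ⟨ht.1.le, lt_of_le_of_lt ht.2 hy.2⟩
        have i0 := hw t ht'.2
        have i1 := heb t ht'
        have i2 := hfb t ht'
        have i3 : Real.exp (G t) ≤ Real.exp (G y) := Real.exp_le_exp.2 (hGmono t y ht.2 hy.2)
        rw [Real.norm_eq_abs, abs_mul, abs_mul]
        calc |e t| * |f t| * |c t| ≤ |e t| * |f t| * 1 := by gcongr; exact hc t
          _ = |e t| * |f t| := mul_one _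
          _ ≤ C / (ν * √(a - t) ^ 5) * (|f 0| * Real.exp (G y)) := by
            gcongr
            exact i2.trans (by gcongr)
      · exact (hcont.mul continuousOn_const).intervalIntegrable
    rw [intervalIntegral.integral_mul_const, intervalIntegral.integral_eq_sub_of_hasDerivAt
      (f := G) (fun t ht => hGd t (by
        rw [Set.uIcc_of_le hy.1] at ht; exact lt_of_le_of_lt ht.2 hy.2))
      hcont.intervalIntegrable, Real.norm_eq_abs] at h1
    have hp : 0 < |f 0| := abs_pos.2 hf0
    rw [abs_mul, abs_div, abs_one]
    have h2 : (G y - G 0) * (|f 0| * Real.exp (G y)) ≤ G y * (|f 0| * Real.exp (G y)) := by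
      have := hG0 0 ha
      gcongr
      linarith
    calc 1 / |f 0| * |∫ t in (0 : ℝ)..y, e t * f t * c t|
        ≤ 1 / |f 0| * (G y * (|f 0| * Real.exp (G y))) := by gcongr; linarith
      _ = G y * Real.exp (G y) := by field_simp
  -- smooth forms
  set A : ℝ → ℝ := fun y => ∫ t in (0 : ℝ)..y, e t * f t * Real.cos (ω t) with hA
  set B : ℝ → ℝ := fun y => ∫ t in (0 : ℝ)..y, e t * f t * Real.sin (ω t) with hB
  have hAd : ∀ y ∈ Set.Ioo (-a) a, HasDerivAt A (e y * f y * Real.cos (ω y)) y := fun y hy =>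
    intervalIntegral.integral_hasDerivAt_right (hcc.mono (hUs y hy)).intervalIntegrable
      (hcc.stronglyMeasurableAtFilter isOpen_Ioo y hy) (hcc.continuousAt (isOpen_Ioo.mem_nhds hy))
  have hBd : ∀ y ∈ Set.Ioo (-a) a, HasDerivAt B (e y * f y * Real.sin (ω y)) y := fun y hy =>
    intervalIntegral.integral_hasDerivAt_right (hsc.mono (hUs y hy)).intervalIntegrable
      (hsc.stronglyMeasurableAtFilter isOpen_Ioo y hy) (hsc.continuousAt (isOpen_Ioo.mem_nhds hy))
  set R : ℝ → ℝ := fun y => (1 / f 0) * (Real.sin (ω y) * A y - Real.cos (ω y) * B y) with hR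
  set T : ℝ → ℝ := fun y => (1 / f 0) * (Real.cos (ω y) * A y + Real.sin (ω y) * B y) with hT
  have hRe : ∀ y ∈ Set.Ioo (-a) a,
      (1 / f 0) * (∫ t in (0 : ℝ)..y, e t * f t * Real.sin (ω y - ω t)) = R y := by
    intro y hy
    simp only [hR, hA, hB]
    congr 1
    rw [← intervalIntegral.integral_const_mul, ← intervalIntegral.integral_const_mul,
      ← intervalIntegral.integral_sub]
    · congr 1
      funext t
      rw [Real.sin_sub]
      ring
    · exact (hcc.mono (hUs y hy)).intervalIntegrable.const_mul _
    · exact (hsc.mono (hUs y hy)).intervalIntegrable.const_mul _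
  have hTe : ∀ y ∈ Set.Ioo (-a) a,
      (1 / f 0) * (∫ t in (0 : ℝ)..y, e t * f t * Real.cos (ω y - ω t)) = T y := by
    intro y hy
    simp only [hT, hA, hB]
    congr 1
    rw [← intervalIntegral.integral_const_mul, ← intervalIntegral.integral_const_mul,
      ← intervalIntegral.integral_add]
    · congr 1
      funext t
      rw [Real.cos_sub]
      ring
    · exact (hcc.mono (hUs y hy)).intervalIntegrable.const_mul _
    · exact (hsc.mono (hUs y hy)).intervalIntegrable.const_mul _
  have hRb : ∀ y ∈ Set.Ico 0 a, |R y| ≤ G y * Real.exp (G y) := fun y hy => by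
    rw [← hRe y (hsub y hy)]
    exact hIb y hy (fun t => Real.sin (ω y - ω t)) fun t => Real.abs_sin_le_one _
  have hTb : ∀ y ∈ Set.Ico 0 a, |T y| ≤ G y * Real.exp (G y) := fun y hy => by
    rw [← hTe y (hsub y hy)]
    exact hIb y hy (fun t => Real.cos (ω y - ω t)) fun t => Real.abs_cos_le_one _
  have hRd : ∀ y ∈ Set.Ioo (-a) a, HasDerivAt R (b y * T y) y := fun y hy => by
    have h1 := (((hω y hy).sin.fun_mul (hAd y hy)).fun_sub
      ((hω y hy).cos.fun_mul (hBd y hy))).const_mul (1 / f 0)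
    refine h1.congr_deriv ?_
    simp only [hT]
    ring
  have hTd : ∀ y ∈ Set.Ioo (-a) a, HasDerivAt T (1 / f 0 * (e y * f y) - b y * R y) y :=
    fun y hy => by
    have h1 := (((hω y hy).cos.fun_mul (hAd y hy)).fun_add
      ((hω y hy).sin.fun_mul (hBd y hy))).const_mul (1 / f 0)
    refine h1.congr_deriv ?_
    simp only [hR]
    linear_combination (1 / f 0) * (e y * f y) * Real.sin_sq_add_cos_sq (ω y)
  set h := a - s with hh
  have hh0 : 0 < h := by have := hs.2; linarith
  have hxs' := abs_le.1 hxs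
  have hseg : ∀ y ∈ Set.uIcc s x, y ∈ Set.Ico 0 a ∧ h / 2 ≤ a - y ∧ |y - s| ≤ |x - s| := by
    intro y hy
    have h3 : |y - s| ≤ |x - s| := Set.abs_sub_left_of_mem_uIcc hy
    have h4 := abs_le.1 (h3.trans hxs)
    refine ⟨⟨?_, by linarith [h4.2]⟩, by linarith [h4.2], h3⟩
    rcases Set.mem_uIcc.1 hy with h | h
    · linarith [h.1, hs.1]
    · linarith [h.1]
  set D := Real.exp (C / κ) * (C * (C / κ) + C ^ 2 / κ + C ^ 3) with hD
  have hD0 : 0 ≤ D := by positivity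
  set v := √(h / 2) with hv
  have hv0 : 0 < v := Real.sqrt_pos.2 (by linarith)
  have hWd : ∀ y ∈ Set.uIcc s x, HasDerivWithinAt (fun y => b y * T y)
      (b' y * T y + b y * (1 / f 0 * (e y * f y) - b y * R y)) (Set.uIcc s x) y := fun y hy =>
    ((hb y (hsub y (hseg y hy).1)).fun_mul (hTd y (hsub y (hseg y hy).1))).hasDerivWithinAt
  have hWb : ∀ y ∈ Set.uIcc s x,
      ‖b' y * T y + b y * (1 / f 0 * (e y * f y) - b y * R y)‖ ≤ D * (ν / v) := by
    intro y hy
    obtain ⟨hy0, hyh, -⟩ := hseg y hy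
    set w := √(a - y) with hwy
    have hw0 : 0 < w := hw y hy0.2
    have hvw : v ≤ w := Real.sqrt_le_sqrt hyh
    have hκw : κ ≤ ν * w ^ 3 := hκb.trans (by gcongr)
    have hGy : G y ≤ C / (ν * w ^ 3) := by
      simp only [hGdef, ← hwy]
      gcongr
      linarith
    have hGκ : C / (ν * w ^ 3) ≤ C / κ := by gcongr
    have hexp : Real.exp (G y) ≤ Real.exp (C / κ) := Real.exp_le_exp.2 (hGy.trans hGκ)
    set X := Real.exp (C / κ) with hX
    have hX0 : 0 < X := Real.exp_pos _
    have i1 : |b' y * T y| ≤ C * (ν / w) * (C / κ * X) := by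
      rw [abs_mul]
      have := hTb y hy0
      have h2 : G y * Real.exp (G y) ≤ C / κ * X := by
        have := hGy.trans hGκ
        gcongr
      exact mul_le_mul (hbb' y hy0) (this.trans h2) (abs_nonneg _) (by positivity)
    have i2 : |b y * (1 / f 0 * (e y * f y))| ≤ C ^ 2 / κ * X * (ν / w) := by
      rw [abs_mul, abs_mul, abs_mul, abs_div, abs_one]
      have hp : 0 < |f 0| := abs_pos.2 hf0
      calc |b y| * (1 / |f 0| * (|e y| * |f y|))
          ≤ (C * ν * w) * (1 / |f 0| * (C / (ν * w ^ 5) * (|f 0| * X))) := by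
            have j1 := hbb y hy0
            have j2 := heb y hy0
            have j3 : |f y| ≤ |f 0| * X := (hfb y hy0).trans (by gcongr)
            gcongr
        _ = C ^ 2 / (ν * w ^ 3) * X * (ν / w) := by field_simp
        _ ≤ C ^ 2 / κ * X * (ν / w) := by gcongr
    have i3 : |b y * (b y * R y)| ≤ C ^ 3 * X * (ν / w) := by
      rw [abs_mul, abs_mul]
      calc |b y| * (|b y| * |R y|)
          ≤ (C * ν * w) * ((C * ν * w) * (C / (ν * w ^ 3) * X)) := by
            have j1 := hbb y hy0
            have j3 : |R y| ≤ C / (ν * w ^ 3) * X := (hRb y hy0).trans (by gcongr)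
            gcongr
        _ = C ^ 3 * X * (ν / w) := by field_simp
    have i4 : ‖b' y * T y + b y * (1 / f 0 * (e y * f y) - b y * R y)‖ ≤ D * (ν / w) := by
      rw [Real.norm_eq_abs]
      have : b' y * T y + b y * (1 / f 0 * (e y * f y) - b y * R y) =
        b' y * T y + b y * (1 / f 0 * (e y * f y)) - b y * (b y * R y) := by ring
      rw [this]
      have j1 := abs_sub (b' y * T y + b y * (1 / f 0 * (e y * f y))) (b y * (b y * R y))
      have j2 := abs_add_le (b' y * T y) (b y * (1 / f 0 * (e y * f y)))
      have j3 : D * (ν / w) = C * (ν / w) * (C / κ * X) + C ^ 2 / κ * X * (ν / w)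
        + C ^ 3 * X * (ν / w) := by rw [hD]; ring
      rw [j3]
      linarith
    exact i4.trans (by gcongr)
  have hWs : ∀ y ∈ Set.uIcc s x, |b y * T y - b s * T s| ≤ D * (ν / v) * |x - s| := by
    intro y hy
    have := Convex.norm_image_sub_le_of_norm_hasDerivWithin_le hWd hWb (convex_uIcc s x)
      Set.left_mem_uIcc hy
    rw [Real.norm_eq_abs, Real.norm_eq_abs] at this
    refine this.trans ?_
    have := (hseg y hy).2.2
    gcongr
  have hφd : ∀ y ∈ Set.uIcc s x, HasDerivWithinAt (fun y => R y - b s * T s * y)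
      (b y * T y - b s * T s) (Set.uIcc s x) y := fun y hy => by
    have h1 := (hRd y (hsub y (hseg y hy).1)).fun_sub ((hasDerivAt_id y).const_mul (b s * T s))
    refine (h1.congr_deriv ?_).hasDerivWithinAt
    ring
  have hfin := Convex.norm_image_sub_le_of_norm_hasDerivWithin_le hφd
    (fun y hy => by rw [Real.norm_eq_abs]; exact hWs y hy) (convex_uIcc s x)
      Set.left_mem_uIcc Set.right_mem_uIcc
  rw [Real.norm_eq_abs, Real.norm_eq_abs] at hfin
  have hxm := (hseg x Set.right_mem_uIcc).1
  rw [hRe x (hsub x hxm), hRe s (hsub s hs), hTe s (hsub s hs)]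
  have e1 : R x - R s - b s * T s * (x - s) = R x - b s * T s * x - (R s - b s * T s * s) := by ring
  rw [e1]
  refine hfin.trans (le_of_eq ?_)
  ring

end JacAux

namespace JacAux

lemma g_deriv (c x : ℝ) : HasDerivAt (fun y : ℝ => c - y ^ 2) (-(2 * x)) x := by
  simpa using ((hasDerivAt_id x).fun_pow 2).const_sub c

lemma b_eq (d : ℕ) (α x : ℝ) :
    bda d α x = √(1 - qda d α - x ^ 2) * √(NN d α) / (1 - x ^ 2) := rfl

/-- derivative of `b` -/
def bd1 (d : ℕ) (α x : ℝ) : ℝ := bda d α x * (-x / (1 - qda d α - x ^ 2) + 2 * x / (1 - x ^ 2))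

lemma b_deriv {d : ℕ} {α x : ℝ} (hg : 0 < 1 - qda d α - x ^ 2) (hx : 0 < 1 - x ^ 2) :
    HasDerivAt (bda d α) (bd1 d α x) x := by
  have h1 := (((g_deriv (1 - qda d α) x).sqrt hg.ne').mul_const (√(NN d α))).fun_div
    (g_deriv 1 x) hx.ne'
  refine h1.congr_deriv ?_
  unfold bd1
  rw [b_eq]
  have hr : 0 < √(1 - qda d α - x ^ 2) := Real.sqrt_pos.2 hg
  have hr2 : √(1 - qda d α - x ^ 2) ^ 2 = 1 - qda d α - x ^ 2 := Real.sq_sqrt hg.le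
  generalize √(1 - qda d α - x ^ 2) = r at *
  rw [← hr2]
  field_simp
  ring

/-- amplitude -/
def Aw (d : ℕ) (α x : ℝ) : ℝ :=
  ((1 - qda d α - x ^ 2) * NN d α) ^ ((1 : ℝ) / 4) * (1 - x ^ 2) ^ (α / 2)

/-- log-derivative of amplitude -/
def LL (d : ℕ) (α x : ℝ) : ℝ := -x / (2 * (1 - qda d α - x ^ 2)) - α * x / (1 - x ^ 2)

lemma Aw_deriv {d : ℕ} {α x : ℝ} (hα : 1 < α) (hg : 0 < 1 - qda d α - x ^ 2)
    (hx : 0 < 1 - x ^ 2) : HasDerivAt (Aw d α) (Aw d α x * LL d α x) x := by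
  have hN := NN_pos (d := d) hα
  have hgN : 0 < (1 - qda d α - x ^ 2) * NN d α := by positivity
  have h0 := ((g_deriv (1 - qda d α) x).mul_const (NN d α)).rpow_const (p := (1 : ℝ) / 4)
    (Or.inl hgN.ne')
  have h1 := h0.fun_mul (pw_deriv (α / 2) hx)
  refine h1.congr_deriv ?_
  rw [Real.rpow_sub_one hgN.ne']
  unfold Aw LL
  field_simp
  ring

/-- `k = f_ω` -/
def kk (d : ℕ) (α x : ℝ) : ℝ :=
  Aw d α x / bda d α x * (LL d α x * jacobiP α α d x + jp1 α d x)

lemma b_pos {d : ℕ} {α x : ℝ} (hα : 1 < α) (hg : 0 < 1 - qda d α - x ^ 2) (hx : 0 < 1 - x ^ 2) :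
    0 < bda d α x := by
  have hN := NN_pos (d := d) hα
  rw [b_eq]
  positivity

lemma f_deriv {d : ℕ} {α x : ℝ} (hα : 1 < α) (hg : 0 < 1 - qda d α - x ^ 2)
    (hx : 0 < 1 - x ^ 2) : HasDerivAt (fda d α) (bda d α x * kk d α x) x := by
  have hb := b_pos hα hg hx
  have h1 := (Aw_deriv hα hg hx).fun_mul (jp_deriv α d x)
  refine h1.congr_deriv ?_
  unfold kk
  field_simp

lemma L_deriv {d : ℕ} {α x : ℝ} (hg : 0 < 1 - qda d α - x ^ 2) (hx : 0 < 1 - x ^ 2) :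
    HasDerivAt (LL d α) (-1 / (2 * (1 - qda d α - x ^ 2)) - x ^ 2 / (1 - qda d α - x ^ 2) ^ 2
      - α / (1 - x ^ 2) - 2 * α * x ^ 2 / (1 - x ^ 2) ^ 2) x := by
  have h1 := (hasDerivAt_id' x).fun_neg.fun_div ((g_deriv (1 - qda d α) x).const_mul 2)
    (by positivity)
  have h2 := ((hasDerivAt_id' x).const_mul α).fun_div (g_deriv 1 x) hx.ne'
  refine (h1.fun_sub h2).congr_deriv ?_
  field_simp
  ring

lemma alg_key {q N α x : ℝ} (hN : N ≠ 0) (hg : 1 - q - x ^ 2 ≠ 0)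
    (hx : 1 - x ^ 2 ≠ 0) (hq : q * N = α ^ 2 - 1) :
    (-x / (2 * (1 - q - x ^ 2)) - α * x / (1 - x ^ 2)
        - (-x / (1 - q - x ^ 2) + 2 * x / (1 - x ^ 2))) *
          (-x / (2 * (1 - q - x ^ 2)) - α * x / (1 - x ^ 2))
      + (-1 / (2 * (1 - q - x ^ 2)) - x ^ 2 / (1 - q - x ^ 2) ^ 2
      - α / (1 - x ^ 2) - 2 * α * x ^ 2 / (1 - x ^ 2) ^ 2) - (N - α ^ 2 - α) / (1 - x ^ 2)
      = (1 - q - x ^ 2) * N / (1 - x ^ 2) ^ 2 *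
        (-(-(x ^ 6 + 6 * q * x ^ 4 - 3 * x ^ 2 + 4 * q ^ 2
    - 6 * q + 2) / (4 * N * (1 - q - x ^ 2) ^ 3)) - 1) := by
  have e1 : (1 - q - x ^ 2) * N / (1 - x ^ 2) ^ 2 *
        (-(-(x ^ 6 + 6 * q * x ^ 4 - 3 * x ^ 2 + 4 * q ^ 2
    - 6 * q + 2) / (4 * N * (1 - q - x ^ 2) ^ 3)) - 1) =
      (x ^ 6 + 6 * q * x ^ 4 - 3 * x ^ 2 + 4 * q ^ 2
    - 6 * q + 2) / (4 * (1 - q - x ^ 2) ^ 2 * (1 - x ^ 2) ^ 2)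
      - (N * (1 - x ^ 2) - q * N) / (1 - x ^ 2) ^ 2 := by
    field_simp
    ring
  rw [e1, hq]
  field_simp
  ring

lemma k_deriv {d : ℕ} {α x : ℝ} (hα : 1 < α) (hg : 0 < 1 - qda d α - x ^ 2)
    (hx : 0 < 1 - x ^ 2) :
    HasDerivAt (kk d α) ((-(epsda d α x * bda d α x) - bda d α x) * fda d α x) x := by
  have hb := b_pos hα hg hx
  have hN := NN_pos (d := d) hα
  have h1 := ((Aw_deriv hα hg hx).fun_div (b_deriv hg hx) hb.ne').fun_mul
    (((L_deriv (α := α) hg hx).fun_mul (jp_deriv α d x)).fun_add (jp1_deriv α d x))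
  refine h1.congr_deriv ?_
  have ode := jp_ode α d x
  have hq := q_mul (d := d) hα
  have e2 : jp2 α d x = ((2 * α + 2) * x * jp1 α d x
        - (d : ℝ) * ((d : ℝ) + 2 * α + 1) * jacobiP α α d x) / (1 - x ^ 2) := by
    field_simp
    linarith
  have hNe : (d : ℝ) * ((d : ℝ) + 2 * α + 1) = NN d α - α ^ 2 - α := by unfold NN; ring
  have hf : fda d α x = Aw d α x * jacobiP α α d x := rfl
  have hep : epsda d α x = -(x ^ 6 + 6 * qda d α * x ^ 4 - 3 * x ^ 2 + 4 * qda d α ^ 2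
    - 6 * qda d α + 2) / (4 * NN d α * (1 - qda d α - x ^ 2) ^ 3) := rfl
  have hb2 : bda d α x ^ 2 = (1 - qda d α - x ^ 2) * NN d α / (1 - x ^ 2) ^ 2 := by
    rw [b_eq, div_pow, mul_pow, Real.sq_sqrt hg.le, Real.sq_sqrt hN.le]
  have hrhs : (-(epsda d α x * bda d α x) - bda d α x) * fda d α x =
      Aw d α x / bda d α x * (bda d α x ^ 2 * (-epsda d α x - 1) * jacobiP α α d x) := by
    rw [hf]
    field_simp
  have hlhs : (Aw d α x * LL d α x * bda d α x - Aw d α x * bd1 d α x) / bda d α x ^ 2 =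
      Aw d α x / bda d α x *
        (LL d α x - (-x / (1 - qda d α - x ^ 2) + 2 * x / (1 - x ^ 2))) := by
    unfold bd1
    field_simp
  rw [hrhs, hlhs, hb2, hep, e2, hNe]
  have hα2 : α ^ 2 = qda d α * NN d α + 1 := by linarith
  have hLval : LL d α x = -x / (2 * (1 - qda d α - x ^ 2)) - α * x / (1 - x ^ 2) := rfl
  have key : (LL d α x - (-x / (1 - qda d α - x ^ 2) + 2 * x / (1 - x ^ 2))) * LL d α x
      + (-1 / (2 * (1 - qda d α - x ^ 2)) - x ^ 2 / (1 - qda d α - x ^ 2) ^ 2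
      - α / (1 - x ^ 2) - 2 * α * x ^ 2 / (1 - x ^ 2) ^ 2) - (NN d α - α ^ 2 - α) / (1 - x ^ 2)
      = (1 - qda d α - x ^ 2) * NN d α / (1 - x ^ 2) ^ 2 *
        (-(-(x ^ 6 + 6 * qda d α * x ^ 4 - 3 * x ^ 2 + 4 * qda d α ^ 2
    - 6 * qda d α + 2) / (4 * NN d α * (1 - qda d α - x ^ 2) ^ 3)) - 1) := by
    rw [hLval]
    exact alg_key hN.ne' hg.ne' hx.ne' hq
  have key1 : (LL d α x - (-x / (1 - qda d α - x ^ 2) + 2 * x / (1 - x ^ 2))) + LL d α x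
      + (2 * α + 2) * x / (1 - x ^ 2) = 0 := by
    rw [hLval]
    field_simp
    ring
  rw [← key]
  linear_combination (Aw d α x / bda d α x * jp1 α d x) * key1

/-- smooth form of the phase -/
def om (d : ℕ) (α x : ℝ) : ℝ :=
  √(NN d α) * (Real.arctan (1 * x / √(1 - qda d α - x ^ 2)) -
    √(qda d α) * Real.arctan (√(qda d α) * x / √(1 - qda d α - x ^ 2)))

lemma arccos_sqrt {g D y : ℝ} (hg : 0 < g) (hy : 0 ≤ y) (hD : D = g + y ^ 2) :
    Real.arccos (√(g / D)) = Real.arctan (y / √g) := by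
  have hD0 : 0 < D := by rw [hD]; positivity
  have h1 : 0 < g / D := by positivity
  rw [Real.arccos_eq_arctan (Real.sqrt_pos.2 h1), Real.sq_sqrt h1.le]
  have h2 : 1 - g / D = y ^ 2 / D := by
    field_simp
    linarith
  rw [h2, Real.sqrt_div (sq_nonneg y), Real.sqrt_sq hy, Real.sqrt_div hg.le]
  have := Real.sqrt_pos.2 hD0
  have := Real.sqrt_pos.2 hg
  congr 1
  field_simp

lemma om_eq {d : ℕ} {α x : ℝ} (hα : 1 < α) (hg : 0 < 1 - qda d α - x ^ 2) (hx : 0 ≤ x) :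
    omegada d α x = om d α x := by
  have hq := q_pos (d := d) hα
  unfold omegada om
  rw [arccos_sqrt hg (y := 1 * x) (by linarith) (by ring),
    arccos_sqrt hg (y := √(qda d α) * x) (by positivity)
      (by rw [mul_pow, Real.sq_sqrt hq.le]; ring)]
  rfl

lemma arctan_deriv (c : ℝ) {u x : ℝ} (hg : 0 < u - x ^ 2) :
    HasDerivAt (fun y : ℝ => Real.arctan (c * y / √(u - y ^ 2)))
      (c * u / (√(u - x ^ 2) * (u - x ^ 2 + c ^ 2 * x ^ 2))) x := by
  have hr : 0 < √(u - x ^ 2) := Real.sqrt_pos.2 hg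
  have h1 := (((hasDerivAt_id' x).const_mul c).fun_div ((g_deriv u x).sqrt hg.ne') hr.ne').arctan
  refine h1.congr_deriv ?_
  have hr2 : √(u - x ^ 2) ^ 2 = u - x ^ 2 := Real.sq_sqrt hg.le
  have hu : u = √(u - x ^ 2) ^ 2 + x ^ 2 := by rw [hr2]; ring
  generalize √(u - x ^ 2) = r at *
  rw [hu]
  have h3 : 0 < r ^ 2 + c ^ 2 * x ^ 2 := by positivity
  have h4 : r ^ 2 + x ^ 2 - x ^ 2 + c ^ 2 * x ^ 2 ≠ 0 := by
    have : r ^ 2 + x ^ 2 - x ^ 2 + c ^ 2 * x ^ 2 = r ^ 2 + c ^ 2 * x ^ 2 := by ring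
    rw [this]; exact h3.ne'
  have h5 : 1 + (c * x / r) ^ 2 = (r ^ 2 + c ^ 2 * x ^ 2) / r ^ 2 := by field_simp
  rw [h5]
  have h6 : r ^ 2 + x ^ 2 - x ^ 2 + c ^ 2 * x ^ 2 = r ^ 2 + c ^ 2 * x ^ 2 := by ring
  rw [h6]
  field_simp
  ring

lemma om_deriv {d : ℕ} {α x : ℝ} (hα : 1 < α) (hg : 0 < 1 - qda d α - x ^ 2)
    (hx : 0 < 1 - x ^ 2) : HasDerivAt (om d α) (bda d α x) x := by
  have hq := q_pos (d := d) hα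
  have hq1 := q_lt (d := d) hα
  have h1 := ((arctan_deriv 1 hg).fun_sub ((arctan_deriv (√(qda d α)) hg).const_mul
    (√(qda d α)))).const_mul (√(NN d α))
  refine h1.congr_deriv ?_
  rw [b_eq]
  have hr : 0 < √(1 - qda d α - x ^ 2) := Real.sqrt_pos.2 hg
  have hr2 : √(1 - qda d α - x ^ 2) ^ 2 = 1 - qda d α - x ^ 2 := Real.sq_sqrt hg.le
  have hs2 : √(qda d α) ^ 2 = qda d α := Real.sq_sqrt hq.le
  have e1 : 1 - qda d α - x ^ 2 + √(qda d α) ^ 2 * x ^ 2 = (1 - qda d α) * (1 - x ^ 2) := by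
    rw [hs2]; ring
  have e2 : 1 - qda d α - x ^ 2 + 1 ^ 2 * x ^ 2 = 1 - qda d α := by ring
  rw [e1, e2]
  have h3 : 1 - qda d α ≠ 0 := by linarith
  generalize √(1 - qda d α - x ^ 2) = r at *
  generalize √(qda d α) = t at *
  field_simp
  rw [hs2, hr2]
  ring

end JacAux

namespace JacAux

lemma pow_bd {δ c : ℝ} (hδ : 0 < δ) (hδ1 : δ ≤ 1) (hc0 : 0 ≤ c) (hc : c ≤ 16) {n : ℕ} (hn : n ≤ 6) :
    c / δ ^ n ≤ 16 / δ ^ 6 := by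
  have := pow_le_pow_of_le_one hδ.le hδ1 hn
  gcongr

lemma elem_bd {δ q a t : ℝ} (hδ : 0 < δ) (hδq : δ ≤ q) (hδq' : δ ≤ 1 - q) (haa : a ^ 2 = 1 - q)
    (ha0 : 0 < a) (ht : t ∈ Set.Ico 0 a) : 0 < √(a - t) ∧ √(a - t) ≤ 1 ∧ 0 < √(1 - q - t ^ 2) ∧
      √(1 - q - t ^ 2) ^ 2 = 1 - q - t ^ 2 ∧
      δ * √(a - t) ≤ √(1 - q - t ^ 2) ∧ √(1 - q - t ^ 2) ≤ 2 * √(a - t) ∧ δ ≤ 1 - t ^ 2 ∧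
      1 - t ^ 2 ≤ 1 := by
  obtain ⟨ht0, ht1⟩ := ht
  have ha1 : a < 1 := by nlinarith
  have haδ : δ ≤ a := by nlinarith
  have h1 : 0 < a - t := by linarith
  have hw2 : √(a - t) ^ 2 = a - t := Real.sq_sqrt h1.le
  have hfac : 1 - q - t ^ 2 = (a + t) * (a - t) := by rw [← haa]; ring
  have hgt : 0 < 1 - q - t ^ 2 := by rw [hfac]; positivity
  refine ⟨Real.sqrt_pos.2 h1, ?_, Real.sqrt_pos.2 hgt, Real.sq_sqrt hgt.le, ?_, ?_, ?_, ?_⟩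
  · exact Real.sqrt_le_iff.2 ⟨by norm_num, by linarith⟩
  · apply Real.le_sqrt_of_sq_le
    rw [mul_pow, hw2, hfac]
    have : δ ^ 2 ≤ a + t := by nlinarith
    gcongr
  · apply Real.sqrt_le_iff.2
    refine ⟨by positivity, ?_⟩
    rw [mul_pow, hw2, hfac]
    have : a + t ≤ 2 ^ 2 := by linarith
    gcongr
  · linarith
  · linarith [sq_nonneg t]

set_option maxHeartbeats 4000000 in
/-- The quantitative estimate. -/
lemma core {δ κ : ℝ} (hδ : 0 < δ) (hκ : 0 < κ) : ∃ K : ℝ, 0 ≤ K ∧ ∀ (d : ℕ) (α s x : ℝ),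
    1 < α → Even d → δ ≤ qda d α → δ ≤ 1 - qda d α → 0 ≤ s → s < √(1 - qda d α) → 0 ≤ x → x ≠ s →
    |x - s| ≤ (√(1 - qda d α) - s) / 2 → κ ≤ NN d α * (√(1 - qda d α) - s) ^ 3 →
    |(Rda d α x - Rda d α s) / ((x - s) * bda d α s) - Tda d α s| ≤
      K * (|x - s| / (√(1 - qda d α) - s)) := by
  set C : ℝ := 16 / δ ^ 6 with hC
  have hC0 : 0 < C := by positivity
  set κ' := √(κ / 8) with hκ'
  have hκ0 : 0 < κ' := Real.sqrt_pos.2 (by positivity)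
  set D := Real.exp (C / κ') * (C * (C / κ') + C ^ 2 / κ' + C ^ 3) with hD
  have hD0 : 0 < D := by positivity
  refine ⟨D * 2 / δ, by positivity, ?_⟩
  intro d α s x hα hd hδq hδq' hs0 hsa hx0 hxs hxh hκb
  have hN := NN_pos (d := d) hα
  set q := qda d α with hq
  set a := √(1 - q) with ha
  set ν := √(NN d α) with hν
  have hν0 : 0 < ν := Real.sqrt_pos.2 hN
  have hνN : ν ^ 2 = NN d α := Real.sq_sqrt hN.le
  have haa : a ^ 2 = 1 - q := Real.sq_sqrt (by linarith)
  have ha0 : 0 < a := Real.sqrt_pos.2 (by linarith)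
  have hδ1 : δ ≤ 1 := by linarith
  have ha1 : a < 1 := by nlinarith
  have haδ : δ ≤ a := by nlinarith
  have hh : 0 < a - s := by linarith
  have hg : ∀ t ∈ Set.Ioo (-a) a, 0 < 1 - qda d α - t ^ 2 := fun t ht => by
    rw [← hq, ← haa]; nlinarith [ht.1, ht.2]
  have h1t : ∀ t ∈ Set.Ioo (-a) a, 0 < 1 - t ^ 2 := fun t ht => by
    nlinarith [ht.1, ht.2]
  have hsub : ∀ t ∈ Set.Ico 0 a, t ∈ Set.Ioo (-a) a := fun t ht => ⟨by linarith [ht.1], ht.2⟩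
  -- elementary bounds
  have hel : ∀ t ∈ Set.Ico 0 a, 0 < √(a - t) ∧ √(a - t) ≤ 1 ∧ 0 < √(1 - q - t ^ 2) ∧
      √(1 - q - t ^ 2) ^ 2 = 1 - q - t ^ 2 ∧
      δ * √(a - t) ≤ √(1 - q - t ^ 2) ∧ √(1 - q - t ^ 2) ≤ 2 * √(a - t) ∧ δ ≤ 1 - t ^ 2 ∧
      1 - t ^ 2 ≤ 1 :=
    fun t ht => elem_bd hδ hδq hδq' haa ha0 ht
  have hbe : ∀ t, bda d α t = √(1 - q - t ^ 2) * ν / (1 - t ^ 2) := fun t => rfl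
  have hbb : ∀ t ∈ Set.Ico 0 a, |bda d α t| ≤ C * ν * √(a - t) := by
    intro t ht
    obtain ⟨w0, w1, r0, r2, rl, ru, y0, y1⟩ := hel t ht
    rw [abs_of_pos (b_pos hα (hg t (hsub t ht)) (h1t t (hsub t ht))), hbe]
    have hy := h1t t (hsub t ht)
    calc √(1 - q - t ^ 2) * ν / (1 - t ^ 2) ≤ 2 * √(a - t) * ν / δ := by gcongr
      _ = 2 / δ ^ 1 * ν * √(a - t) := by ring
      _ ≤ C * ν * √(a - t) := by
        have := pow_bd hδ hδ1 (c := 2) (by norm_num) (by norm_num) (n := 1) (by norm_num)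
        gcongr
  have hbb' : ∀ t ∈ Set.Ico 0 a, |bd1 d α t| ≤ C * (ν / √(a - t)) := by
    intro t ht
    obtain ⟨w0, w1, r0, r2, rl, ru, y0, y1⟩ := hel t ht
    have hy := h1t t (hsub t ht)
    have ht1 : t ≤ 1 := by linarith [ht.2]
    have ht0 := ht.1
    unfold bd1
    rw [hbe, ← hq, ← r2]
    have hδw : 0 < δ * √(a - t) := by positivity
    generalize √(1 - q - t ^ 2) = r at *
    generalize √(a - t) = w at *
    have e1 : r * ν / (1 - t ^ 2) * (-t / r ^ 2 + 2 * t / (1 - t ^ 2)) =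
      -(ν * t / (r * (1 - t ^ 2))) + 2 * t * r * ν / (1 - t ^ 2) ^ 2 := by
      field_simp
    rw [Real.sqrt_sq r0.le, e1]
    have i1 : |-(ν * t / (r * (1 - t ^ 2)))| ≤ ν * 1 / (δ * w * δ) := by
      rw [abs_neg, abs_of_nonneg (by positivity)]
      gcongr
    have i2 : |2 * t * r * ν / (1 - t ^ 2) ^ 2| ≤ 2 * 1 * (2 * w) * ν / δ ^ 2 := by
      rw [abs_of_nonneg (by positivity)]
      gcongr
    have i3 : 2 * 1 * (2 * w) * ν / δ ^ 2 ≤ 4 * ν / (δ ^ 2 * w) := by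
      rw [div_le_div_iff₀ (by positivity) (by positivity)]
      have : w * w ≤ 1 := by nlinarith
      nlinarith [mul_nonneg (mul_nonneg hν0.le (sq_nonneg δ)) (by linarith : 0 ≤ 1 - w * w)]
    have i4 : ν * 1 / (δ * w * δ) + 4 * ν / (δ ^ 2 * w) = 5 / δ ^ 2 * (ν / w) := by
      field_simp
      norm_num
    have i5 := pow_bd hδ hδ1 (c := 5) (by norm_num) (by norm_num) (n := 2) (by norm_num)
    calc _ ≤ _ := abs_add_le _ _
      _ ≤ 5 / δ ^ 2 * (ν / w) := by linarith
      _ ≤ C * (ν / w) := by gcongr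
  have heb : ∀ t ∈ Set.Ico 0 a, |epsda d α t * bda d α t| ≤ C / (ν * √(a - t) ^ 5) := by
    intro t ht
    obtain ⟨w0, w1, r0, r2, rl, ru, y0, y1⟩ := hel t ht
    have hy := h1t t (hsub t ht)
    have ht1 : t ≤ 1 := by linarith [ht.2]
    have ht0 := ht.1
    have hep : epsda d α t = -(t ^ 6 + 6 * q * t ^ 4 - 3 * t ^ 2 + 4 * q ^ 2
      - 6 * q + 2) / (4 * NN d α * (1 - q - t ^ 2) ^ 3) := rfl
    have hnum : |t ^ 6 + 6 * q * t ^ 4 - 3 * t ^ 2 + 4 * q ^ 2 - 6 * q + 2| ≤ 22 := by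
      have hq0 : 0 ≤ q := by linarith
      have hq1 : q ≤ 1 := by linarith
      have t2 : t ^ 2 ≤ 1 := pow_le_one₀ ht0 ht1
      have t4 : t ^ 4 ≤ 1 := pow_le_one₀ ht0 ht1
      have t6 : t ^ 6 ≤ 1 := pow_le_one₀ ht0 ht1
      have q2 : q ^ 2 ≤ 1 := pow_le_one₀ hq0 hq1
      have qt : q * t ^ 4 ≤ 1 := mul_le_one₀ hq1 (by positivity) t4
      have p2 : 0 ≤ t ^ 2 := by positivity
      have p6 : 0 ≤ t ^ 6 := by positivity
      have p4 : 0 ≤ q * t ^ 4 := by positivity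
      have pq : 0 ≤ q ^ 2 := by positivity
      rw [abs_le]
      constructor <;> linarith
    rw [hep, hbe, ← r2, ← hνN]
    generalize t ^ 6 + 6 * q * t ^ 4 - 3 * t ^ 2 + 4 * q ^ 2 - 6 * q + 2 = P at *
    have hδw : 0 < δ * √(a - t) := by positivity
    generalize √(1 - q - t ^ 2) = r at *
    generalize √(a - t) = w at *
    have e1 : -P / (4 * ν ^ 2 * (r ^ 2) ^ 3) * (r * ν / (1 - t ^ 2)) =
        -(P / (4 * ν * r ^ 5 * (1 - t ^ 2))) := by
      field_simp
    rw [Real.sqrt_sq r0.le, e1, abs_neg, abs_div, abs_of_pos (by positivity : 0 < 4 * ν * r ^ 5 * (1 - t ^ 2))]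
    calc |P| / (4 * ν * r ^ 5 * (1 - t ^ 2)) ≤ 22 / (4 * ν * (δ * w) ^ 5 * δ) := by
          gcongr
      _ = 11 / 2 / δ ^ 6 / (ν * w ^ 5) := by
          field_simp
          norm_num
      _ ≤ C / (ν * w ^ 5) := by
          have := pow_bd hδ hδ1 (c := 11 / 2) (by norm_num) (by norm_num) (n := 6) (by norm_num)
          gcongr
  have hbs0 : 0 < bda d α s :=
    b_pos hα (hg s (hsub s ⟨hs0, hsa⟩)) (h1t s (hsub s ⟨hs0, hsa⟩))
  have hxa : x < a := by have := (abs_le.1 hxh).2; linarith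
  by_cases hf0 : fda d α 0 = 0
  · have e1 : ∀ y, Rda d α y = 0 := fun y => by unfold Rda; rw [hf0]; simp
    have e2 : Tda d α s = 0 := by unfold Tda; rw [hf0]; simp
    rw [e1, e1, e2]
    simp only [sub_self, zero_div, abs_zero]
    positivity
  -- replace the phase
  have hcontE : ContinuousOn (fun t => epsda d α t * bda d α t) (Set.Ioo (-a) a) := by
    apply ContinuousOn.mul
    · unfold epsda
      apply ContinuousOn.div (by fun_prop) (by fun_prop)
      intro t ht
      have h1 := hg t ht
      have h2 : ((d : ℝ) + α) * ((d : ℝ) + α + 1) ≠ 0 := hN.ne'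
      exact mul_ne_zero (mul_ne_zero (by norm_num) h2) (pow_ne_zero _ h1.ne')
    · exact fun t ht => (b_deriv (hg t ht) (h1t t ht)).continuousAt.continuousWithinAt
  have hk0 : kk d α 0 = 0 := by
    unfold kk LL
    rw [jp1_zero α hd]
    simp
  have hκb' : κ' ≤ ν * √((a - s) / 2) ^ 3 := by
    apply Real.sqrt_le_iff.2
    refine ⟨by positivity, ?_⟩
    have e : (ν * √((a - s) / 2) ^ 3) ^ 2 = ν ^ 2 * (√((a - s) / 2) ^ 2) ^ 3 := by ring
    rw [e, hνN, Real.sq_sqrt (by linarith)]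
    have : NN d α * ((a - s) / 2) ^ 3 = NN d α * (a - s) ^ 3 / 8 := by ring
    rw [this]
    linarith
  have main := abstract_est (ω := om d α) (b := bda d α) (b' := bd1 d α) (f := fda d α)
    (k := kk d α) (e := fun t => epsda d α t * bda d α t) ha0 hν0 hC0 hκ0
    (fun t ht => om_deriv hα (hg t ht) (h1t t ht)) (fun t ht => f_deriv hα (hg t ht) (h1t t ht))
    (fun t ht => k_deriv hα (hg t ht) (h1t t ht)) (fun t ht => b_deriv (hg t ht) (h1t t ht))
    hcontE hk0 hf0 heb hbb hbb' ⟨hs0, hsa⟩ hx0 hxh hκb'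
  have hRe : ∀ y ∈ Set.Ico 0 a, Rda d α y = (1 / fda d α 0) * ∫ t in (0 : ℝ)..y,
      epsda d α t * bda d α t * fda d α t * Real.sin (om d α y - om d α t) := by
    intro y hy
    unfold Rda
    congr 1
    apply intervalIntegral.integral_congr
    intro t ht
    rw [Set.uIcc_of_le hy.1] at ht
    have ht' : t ∈ Set.Ico 0 a := ⟨ht.1, lt_of_le_of_lt ht.2 hy.2⟩
    simp only [om_eq hα (hg y (hsub y hy)) hy.1, om_eq hα (hg t (hsub t ht')) ht'.1]
  have hTe : ∀ y ∈ Set.Ico 0 a, Tda d α y = (1 / fda d α 0) * ∫ t in (0 : ℝ)..y,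
      epsda d α t * bda d α t * fda d α t * Real.cos (om d α y - om d α t) := by
    intro y hy
    unfold Tda
    congr 1
    apply intervalIntegral.integral_congr
    intro t ht
    rw [Set.uIcc_of_le hy.1] at ht
    have ht' : t ∈ Set.Ico 0 a := ⟨ht.1, lt_of_le_of_lt ht.2 hy.2⟩
    simp only [om_eq hα (hg y (hsub y hy)) hy.1, om_eq hα (hg t (hsub t ht')) ht'.1]
  rw [← hRe x ⟨hx0, hxa⟩, ← hRe s ⟨hs0, hsa⟩, ← hTe s ⟨hs0, hsa⟩, ← hD] at main
  have hxs0 : x - s ≠ 0 := sub_ne_zero.2 hxs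
  have hax : 0 < |x - s| := abs_pos.2 hxs0
  have e1 : (Rda d α x - Rda d α s) / ((x - s) * bda d α s) - Tda d α s =
      (Rda d α x - Rda d α s - bda d α s * Tda d α s * (x - s)) / ((x - s) * bda d α s) := by
    field_simp
  rw [e1, abs_div, abs_mul, abs_of_pos hbs0]
  obtain ⟨w0, w1, r0, r2, rl, ru, y0, y1⟩ := hel s ⟨hs0, hsa⟩
  have hbl : δ * √(a - s) * ν ≤ bda d α s := by
    rw [hbe, le_div_iff₀ (h1t s (hsub s ⟨hs0, hsa⟩))]
    have : δ * √(a - s) * ν * (1 - s ^ 2) ≤ δ * √(a - s) * ν := by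
      apply mul_le_of_le_one_right (by positivity) y1
    refine this.trans ?_
    gcongr
  have hv : √(a - s) / 2 ≤ √((a - s) / 2) := by
    apply Real.le_sqrt_of_sq_le
    rw [div_pow, Real.sq_sqrt hh.le]
    linarith
  have hw2 : √(a - s) * √(a - s) = a - s := Real.mul_self_sqrt hh.le
  calc _ ≤ D * (ν / √((a - s) / 2)) * |x - s| ^ 2 / (|x - s| * bda d α s) := by gcongr
    _ ≤ D * (ν / (√(a - s) / 2)) * |x - s| ^ 2 / (|x - s| * (δ * √(a - s) * ν)) := by gcongr
    _ = D * 2 / δ * (|x - s| / (√(a - s) * √(a - s))) := by field_simp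
    _ = D * 2 / δ * (|x - s| / (a - s)) := by rw [hw2]

end JacAux

/-- First-order behaviour of the remainder `R_{d,α}` near the largest
Jacobi root `s' = t_{1,d}^{α,α}`:
`R(x) - R(s') = (x - s')·b(s')·(T(s') + o(1))` when `|x - s'| = o(n^{-2/3})`. -/
theorem remainder_taylor_at_max_root
    (ρ c₁ c₂ : ℝ) (hρ : 0 < ρ) (hc₁ : 0 < c₁) (hc₂ : 0 < c₂)
    (d : ℕ → ℕ) (α : ℕ → ℝ) (x : ℕ → ℝ)
    (hde : ∀ n, Even (d n)) (hd2 : ∀ n, 2 ≤ d n)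
    (hα : ∀ n, Real.sqrt (7 / 6) ≤ α n)
    (hdc : Tendsto (fun n : ℕ => (d n : ℝ) / n) atTop (nhds c₁))
    (hαc : Tendsto (fun n : ℕ => α n / n) atTop (nhds c₂))
    (hαd : Tendsto (fun n : ℕ => α n / (d n : ℝ)) atTop (nhds (1 / (2 * ρ))))
    (hx : ∀ n, x n ∈ Set.Icc (0 : ℝ) (Real.sqrt (1 - qda (d n) (α n))))
    (hxne : ∀ n, x n ≠ maxRoot (α n) (α n) (d n))
    (hxc : Tendsto (fun n : ℕ => (n : ℝ) ^ ((2 : ℝ) / 3) * |x n - maxRoot (α n) (α n) (d n)|)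
      atTop (nhds 0)) :
    Tendsto (fun n : ℕ =>
        (Rda (d n) (α n) (x n) - Rda (d n) (α n) (maxRoot (α n) (α n) (d n))) /
            ((x n - maxRoot (α n) (α n) (d n)) *
              bda (d n) (α n) (maxRoot (α n) (α n) (d n))) -
          Tda (d n) (α n) (maxRoot (α n) (α n) (d n)))
      atTop (nhds 0) := by
  have hα1 : ∀ n, 1 < α n := fun n => by
    refine lt_of_lt_of_le ?_ (hα n)
    rw [Real.lt_sqrt (by norm_num)]
    norm_num
  have hcs : 0 < c₁ + c₂ := by linarith
  -- asymptotics of N and q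
  have hinv : Tendsto (fun n : ℕ => (1 : ℝ) / n) atTop (nhds 0) := tendsto_one_div_atTop_nhds_zero_nat
  have hden : Tendsto (fun n : ℕ => ((d n : ℝ) / n + α n / n) * ((d n : ℝ) / n + α n / n + 1 / n))
      atTop (nhds ((c₁ + c₂) * (c₁ + c₂ + 0))) :=
    (hdc.add hαc).mul ((hdc.add hαc).add hinv)
  have hnum : Tendsto (fun n : ℕ => (α n / n) ^ 2 - (1 / (n : ℝ)) ^ 2)
      atTop (nhds (c₂ ^ 2 - 0 ^ 2)) := (hαc.pow 2).sub (hinv.pow 2)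
  have hdeneq : ∀ n : ℕ, 0 < n → ((d n : ℝ) / n + α n / n) * ((d n : ℝ) / n + α n / n + 1 / n) =
      JacAux.NN (d n) (α n) / (n : ℝ) ^ 2 := fun n hn => by
    have : (n : ℝ) ≠ 0 := by positivity
    unfold JacAux.NN
    field_simp
  have hqeq : ∀ n : ℕ, 0 < n → ((α n / n) ^ 2 - (1 / (n : ℝ)) ^ 2) /
      (((d n : ℝ) / n + α n / n) * ((d n : ℝ) / n + α n / n + 1 / n)) = qda (d n) (α n) :=
    fun n hn => by
      have h0 : (n : ℝ) ≠ 0 := by positivity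
      have hN := JacAux.NN_pos (d := d n) (hα1 n)
      have hq := JacAux.q_mul (d := d n) (hα1 n)
      rw [hdeneq n hn, div_eq_iff (by positivity)]
      field_simp
      linarith
  have hqlim : Tendsto (fun n : ℕ => qda (d n) (α n)) atTop
      (nhds ((c₂ ^ 2 - 0 ^ 2) / ((c₁ + c₂) * (c₁ + c₂ + 0)))) := by
    refine (hnum.div hden (by positivity)).congr' ?_
    filter_upwards [eventually_gt_atTop 0] with n hn
    exact hqeq n hn
  set Q := (c₂ ^ 2 - 0 ^ 2) / ((c₁ + c₂) * (c₁ + c₂ + 0)) with hQ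
  have hQ0 : 0 < Q := by rw [hQ]; norm_num; positivity
  have hQ1 : Q < 1 := by
    rw [hQ, div_lt_one (by positivity)]
    nlinarith
  obtain ⟨δ, hδ, hδQ, hδQ'⟩ : ∃ δ : ℝ, 0 < δ ∧ δ < Q ∧ δ < 1 - Q := by
    refine ⟨min Q (1 - Q) / 2, ?_, ?_, ?_⟩
    · have : 0 < min Q (1 - Q) := lt_min hQ0 (by linarith)
      linarith
    · have := min_le_left Q (1 - Q)
      linarith
    · have := min_le_right Q (1 - Q)
      linarith
  have ev1 : ∀ᶠ n in atTop, δ < qda (d n) (α n) := hqlim.eventually (lt_mem_nhds hδQ)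
  have ev2 : ∀ᶠ n in atTop, qda (d n) (α n) < 1 - δ :=
    hqlim.eventually (gt_mem_nhds (by linarith))
  set M := (c₁ + c₂) * (c₁ + c₂ + 0) + 1 with hM
  have hM0 : 0 < M := by positivity
  have ev3 : ∀ᶠ n : ℕ in atTop, JacAux.NN (d n) (α n) ≤ M * (n : ℝ) ^ 2 := by
    have h := hden.eventually (gt_mem_nhds (lt_add_one ((c₁ + c₂) * (c₁ + c₂ + 0))))
    filter_upwards [h, eventually_gt_atTop 0] with n h hn
    rw [hdeneq n hn] at h
    have h0 : 0 < (n : ℝ) ^ 2 := by positivity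
    exact ((div_lt_iff₀ h0).1 h).le
  set κ := min (δ ^ 2 / 2) (δ ^ 3) with hκ
  have hκ0 : 0 < κ := lt_min (by positivity) (by positivity)
  obtain ⟨K, hK0, hK⟩ := JacAux.core hδ hκ0
  set c := (κ / M) ^ ((1 : ℝ) / 3) with hc
  have hc0 : 0 < c := by positivity
  have hc3 : c ^ 3 = κ / M := by
    rw [hc, ← Real.rpow_natCast, ← Real.rpow_mul (by positivity)]
    norm_num
  -- distance from the turning point
  have ev4 : ∀ᶠ n : ℕ in atTop,
      κ ≤ JacAux.NN (d n) (α n) *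
        (√(1 - qda (d n) (α n)) - maxRoot (α n) (α n) (d n)) ^ 3 ∧
      c ≤ (n : ℝ) ^ ((2 : ℝ) / 3) * (√(1 - qda (d n) (α n)) - maxRoot (α n) (α n) (d n)) := by
    filter_upwards [ev1, ev2, ev3, eventually_gt_atTop 0] with n h1 h2 h3 hn
    obtain ⟨hs0, hsa, hs⟩ := JacAux.maxRoot_loc (hα1 n) (hde n)
    have hh : 0 < √(1 - qda (d n) (α n)) - maxRoot (α n) (α n) (d n) := by linarith
    have hk : κ ≤ JacAux.NN (d n) (α n) *
        (√(1 - qda (d n) (α n)) - maxRoot (α n) (α n) (d n)) ^ 3 := by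
      rcases hs with hs | hs
      · refine (min_le_right _ _).trans ?_
        rw [hs, sub_zero]
        have hN1 : 1 ≤ JacAux.NN (d n) (α n) := by
          have := JacAux.NN_ge (d := d n) (hα1 n)
          nlinarith [hα1 n]
        have ha : δ ≤ √(1 - qda (d n) (α n)) := by
          apply Real.le_sqrt_of_sq_le
          nlinarith
        calc δ ^ 3 = 1 * δ ^ 3 := by ring
          _ ≤ _ := by gcongr
      · refine (min_le_left _ _).trans ?_
        have : δ ^ 2 ≤ qda (d n) (α n) ^ 2 := by gcongr
        linarith
    refine ⟨hk, ?_⟩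
    generalize √(1 - qda (d n) (α n)) - maxRoot (α n) (α n) (d n) = h at *
    have hn0 : (0 : ℝ) < n := by exact_mod_cast hn
    have hp : ((n : ℝ) ^ ((2 : ℝ) / 3)) ^ 3 = (n : ℝ) ^ 2 := by
      rw [← Real.rpow_natCast, ← Real.rpow_mul hn0.le, ← Real.rpow_natCast]
      norm_num
    refine le_of_pow_le_pow_left₀ (n := 3) (by norm_num) (by positivity) ?_
    rw [mul_pow, hp, hc3, div_le_iff₀ hM0]
    calc κ ≤ _ := hk
      _ ≤ M * (n : ℝ) ^ 2 * h ^ 3 := by gcongr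
      _ = _ := by ring
  have hlim : Tendsto (fun n : ℕ => K / c *
      ((n : ℝ) ^ ((2 : ℝ) / 3) * |x n - maxRoot (α n) (α n) (d n)|)) atTop (nhds 0) := by
    simpa using hxc.const_mul (K / c)
  have ev5 : ∀ᶠ n : ℕ in atTop,
      (n : ℝ) ^ ((2 : ℝ) / 3) * |x n - maxRoot (α n) (α n) (d n)| < c / 2 :=
    hxc.eventually (gt_mem_nhds (by positivity))
  refine squeeze_zero_norm' ?_ hlim
  filter_upwards [ev1, ev2, ev4, ev5, eventually_gt_atTop 0] with n h1 h2 h4 h5 hn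
  obtain ⟨hs0, hsa, -⟩ := JacAux.maxRoot_loc (hα1 n) (hde n)
  have hh : 0 < √(1 - qda (d n) (α n)) - maxRoot (α n) (α n) (d n) := by linarith
  have hn0 : (0 : ℝ) < n := by exact_mod_cast hn
  have hp0 : 0 < (n : ℝ) ^ ((2 : ℝ) / 3) := by positivity
  have hxh : |x n - maxRoot (α n) (α n) (d n)| ≤
      (√(1 - qda (d n) (α n)) - maxRoot (α n) (α n) (d n)) / 2 := by
    refine le_of_mul_le_mul_left ?_ hp0
    linarith [h4.2]
  have := hK (d n) (α n) (maxRoot (α n) (α n) (d n)) (x n) (hα1 n) (hde n) h1.le (by linarith)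
    hs0 hsa (hx n).1 (hxne n) hxh h4.1
  rw [Real.norm_eq_abs]
  refine this.trans ?_
  have e : K / c * ((n : ℝ) ^ ((2 : ℝ) / 3) * |x n - maxRoot (α n) (α n) (d n)|) =
      K * ((n : ℝ) ^ ((2 : ℝ) / 3) * |x n - maxRoot (α n) (α n) (d n)| / c) := by ring
  rw [e]
  refine mul_le_mul_of_nonneg_left ?_ hK0
  rw [div_le_div_iff₀ hh hc0]
  have := mul_le_mul_of_nonneg_left h4.2 (abs_nonneg (x n - maxRoot (α n) (α n) (d n)))
  linarith
end
end
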